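/- arXiv:1109.3761 — 2 statements merged into one kernel-verified Lean document; each statement's English description precedes it below -/
import Mathlib

section
/- Let A be a piecewise-Koszul algebra with period p and jump degree d, and let 0 → K → M → N → 0 be a short exact sequence of finitely generated graded A-modules. If K and M are piecewise-Koszul modules and both K and M are generated in the same degree s, then N ≅ M/K is a piecewise-Koszul module. -/
noncomputable section

/-- The jump function `δ^d_p(n) = ((n − (n mod p))/p)·d + (n mod p)`. -/
def jump (d p n : ℕ) : ℕ := (n - n % p) / p * d + n % p

/-- A positively graded `F`-algebra `A = ⊕_{i≥0} A_i`. -/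
structure GradedAlg (F : Type) [Field F] where
  A : Type
  [ringA : Ring A]
  [algA : Algebra F A]
  grading : ℕ → Submodule F A
  [graded : GradedAlgebra grading]

attribute [instance] GradedAlg.ringA GradedAlg.algA GradedAlg.graded

namespace GradedAlg

variable {F : Type} [Field F] (𝒜 : GradedAlg F)

/-- The graded Jacobson radical `J = ⊕_{i≥1} A_i`, i.e. the irrelevant ideal. -/
def jideal : Ideal 𝒜.A := (HomogeneousIdeal.irrelevant 𝒜.grading).toIdeal

/-- The standing assumptions: `A_0` is a semisimple Artin algebra, `A` is generated in
degrees 0 and 1 (`A_i · A_j = A_{i+j}`), and `A_1` is finite dimensional over `F`. -/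
structure Standing : Prop where
  semisimple : IsSemisimpleRing ↥(𝒜.grading 0)
  artinian : IsArtinianRing ↥(𝒜.grading 0)
  gen01 : ∀ i j : ℕ, 𝒜.grading i * 𝒜.grading j = 𝒜.grading (i + j)
  findim : FiniteDimensional F ↥(𝒜.grading 1)

/-- A (ℤ-)graded module over the graded algebra `𝒜`. -/
structure GMod where
  M : Type
  [acg : AddCommGroup M]
  [modF : Module F M]
  [modA : Module 𝒜.A M]
  [tower : IsScalarTower F 𝒜.A M]
  [scomm : SMulCommClass 𝒜.A F M]
  grading : ℤ → Submodule F M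
  sup_eq_top : (⨆ j : ℤ, grading j) = ⊤
  indep : iSupIndep grading
  smul_mem : ∀ {i : ℕ} {j : ℤ} {a : 𝒜.A} {m : M},
    a ∈ 𝒜.grading i → m ∈ grading j → a • m ∈ grading ((i : ℤ) + j)

attribute [instance] GMod.acg GMod.modF GMod.modA GMod.tower GMod.scomm

variable {𝒜}

/-- A degree-zero morphism of graded modules. -/
structure GHom (M N : 𝒜.GMod) where
  lin : M.M →ₗ[𝒜.A] N.M
  grad : ∀ (j : ℤ) (x : M.M), x ∈ M.grading j → lin x ∈ N.grading j

/-- A graded module is generated in degree `s` if `A · M_s = M`. -/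
def GMod.GenInDeg (M : 𝒜.GMod) (s : ℤ) : Prop :=
  Submodule.span 𝒜.A (M.grading s : Set M.M) = ⊤

/-- `T` is the trivial graded module `A_0 = A/J`, concentrated in degree `0`. -/
def IsTrivialGMod (T : 𝒜.GMod) : Prop :=
  (∀ j : ℤ, j ≠ 0 → T.grading j = ⊥) ∧
    Nonempty (T.M ≃ₗ[𝒜.A] (𝒜.A ⧸ 𝒜.jideal))

/-- A minimal graded projective resolution
`⋯ → P_{n+1} → P_n → ⋯ → P_0 → M → 0` of the graded module `M`,
with finitely generated terms. -/
structure MinRes (M : 𝒜.GMod) where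
  P : ℕ → 𝒜.GMod
  d : ∀ n : ℕ, GHom (P (n + 1)) (P n)
  aug : GHom (P 0) M
  fg : ∀ n, Module.Finite 𝒜.A (P n).M
  projective : ∀ n, Module.Projective 𝒜.A (P n).M
  aug_surj : Function.Surjective aug.lin
  exact_aug : LinearMap.range (d 0).lin = LinearMap.ker aug.lin
  exact : ∀ n, LinearMap.range (d (n + 1)).lin = LinearMap.ker (d n).lin
  minimal : ∀ n, LinearMap.range (d n).lin ≤ 𝒜.jideal • (⊤ : Submodule 𝒜.A (P n).M)

variable (𝒜)

/-- `M` is a piecewise-Koszul module (period `p`, jump degree `d`, shift `s`):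
it has a minimal graded projective resolution with `P_n` generated in degree `δ^d_p(n) + s`. -/
def IsPKMod (p d : ℕ) (s : ℤ) (M : 𝒜.GMod) : Prop :=
  ∃ R : MinRes M, ∀ n : ℕ, (R.P n).GenInDeg ((jump d p n : ℤ) + s)

/-- `A` is a piecewise-Koszul algebra (period `p`, jump degree `d`): the trivial module `T`
admits a minimal graded projective resolution with `P_n` generated in degree `δ^d_p(n)`. -/
def IsPKAlg (p d : ℕ) (T : 𝒜.GMod) : Prop := IsPKMod 𝒜 p d 0 T

/-- A Koszul module: a minimal graded projective resolution with `P_n` generated in degree `n`. -/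
def IsKoszulMod (M : 𝒜.GMod) : Prop :=
  ∃ R : MinRes M, ∀ n : ℕ, (R.P n).GenInDeg (n : ℤ)

variable {𝒜}

section Ext

variable (T : 𝒜.GMod) {M : 𝒜.GMod}

/-- The space of `A`-linear maps `P_n → T` (cochains). -/
abbrev HomSp (R : MinRes M) (n : ℕ) := (R.P n).M →ₗ[𝒜.A] T.M

/-- Precomposition, as an `F`-linear map on cochains. -/
def precompF {M₁ M₂ : 𝒜.GMod} (g : M₁.M →ₗ[𝒜.A] M₂.M) :
    (M₂.M →ₗ[𝒜.A] T.M) →ₗ[F] (M₁.M →ₗ[𝒜.A] T.M) where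
  toFun f := f ∘ₗ g
  map_add' f₁ f₂ := by ext x; simp
  map_smul' c f := by ext x; simp

/-- Cocycles: maps `P_n → T` vanishing on the image of `P_{n+1}`. -/
def cocyc (R : MinRes M) (n : ℕ) : Submodule F (HomSp T R n) :=
  LinearMap.ker (precompF T (R.d n).lin)

/-- Coboundaries: maps `P_n → T` factoring through `d_{n-1}`. -/
def cobound (R : MinRes M) : (n : ℕ) → Submodule F (HomSp T R n)
  | 0 => ⊥
  | n + 1 => LinearMap.range (precompF T (R.d n).lin)

/-- The coboundaries, viewed inside the cocycles. -/
def extRel (R : MinRes M) (n : ℕ) : Submodule F ↥(cocyc T R n) :=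
  (cobound T R n).comap (cocyc T R n).subtype

/-- `Ext^n_A(M, T)`, computed from the resolution `R` of `M`. -/
abbrev ExtQ (R : MinRes M) (n : ℕ) := ↥(cocyc T R n) ⧸ extRel T R n

/-- The class in `Ext^n_A(M,T)` of a cocycle. -/
def extCls {R : MinRes M} {n : ℕ} {f : HomSp T R n} (hf : f ∈ cocyc T R n) :
    ExtQ T R n :=
  Submodule.Quotient.mk ⟨f, hf⟩

/-- Cochains of shift-degree `j`: maps `P_n → T` vanishing on every `(P_n)_i` with `i ≠ j`. -/
def homDeg (R : MinRes M) (n : ℕ) (j : ℤ) : Submodule F (HomSp T R n) where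
  carrier := {f | ∀ i : ℤ, i ≠ j → ∀ x ∈ (R.P n).grading i, f x = 0}
  add_mem' := fun hf hg i hi x hx => by
    simp only [LinearMap.add_apply, hf i hi x hx, hg i hi x hx, add_zero]
  zero_mem' := fun i hi x hx => rfl
  smul_mem' := fun c f hf i hi x hx => by
    simp only [LinearMap.smul_apply, hf i hi x hx, smul_zero]

/-- The shift-degree `j` component `Ext^n_A(M,T)_j`. -/
def extComp (R : MinRes M) (n : ℕ) (j : ℤ) : Submodule F (ExtQ T R n) :=
  Submodule.map (extRel T R n).mkQ ((homDeg T R n j).comap (cocyc T R n).subtype)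

/-- Transport `Ext` along an equality of cohomological degrees. -/
def extCast (R : MinRes M) {a b : ℕ} (h : a = b) : ExtQ T R a ≃ₗ[F] ExtQ T R b :=
  h ▸ LinearEquiv.refl F (ExtQ T R a)

/-- A chain map lifting of a cochain `g : P_j → T` over the resolutions `RM` of `M`
and `RT` of `T`. -/
structure ChainLift (RT : MinRes T) (RM : MinRes M) (j : ℕ)
    (g : (RM.P j).M →ₗ[𝒜.A] T.M) where
  ℓ : ∀ m k : ℕ, m = k + j → ((RM.P m).M →ₗ[𝒜.A] (RT.P k).M)
  comm_aug : RT.aug.lin ∘ₗ ℓ j 0 (by omega) = g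
  comm : ∀ k : ℕ, (RT.d k).lin ∘ₗ ℓ (k + j + 1) (k + 1) (by omega) =
    ℓ (k + j) k rfl ∘ₗ (RM.d (k + j)).lin

/-- `μ` is the (bigraded family of) Yoneda product(s)
`Ext^i(T,T) ⊗ Ext^j(M,T) → Ext^{i+j}(M,T)`: it is computed by composing a cocycle
`f : P_i → T` with a chain lifting of a cocycle `g : Q_j → T`. -/
def IsYonedaMul (RT : MinRes T) (RM : MinRes M)
    (μ : ∀ i j : ℕ, ExtQ T RT i →ₗ[F] ExtQ T RM j →ₗ[F] ExtQ T RM (i + j)) : Prop :=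
  ∀ (i j : ℕ) (f : HomSp T RT i) (hf : f ∈ cocyc T RT i)
    (g : HomSp T RM j) (hg : g ∈ cocyc T RM j)
    (L : ChainLift T RT RM j g)
    (hc : f ∘ₗ L.ℓ (i + j) i (by omega) ∈ cocyc T RM (i + j)),
    μ i j (extCls T hf) (extCls T hg) = extCls T hc

/-- `E(A) = Ext^*_A(A_0,A_0)` is generated in the ext-degrees belonging to `S`. -/
def ExtGenIn (RT : MinRes T)
    (μ : ∀ i j : ℕ, ExtQ T RT i →ₗ[F] ExtQ T RT j →ₗ[F] ExtQ T RT (i + j))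
    (S : Set ℕ) : Prop :=
  ∀ W : (n : ℕ) → Submodule F (ExtQ T RT n),
    (∀ n ∈ S, W n = ⊤) →
    (∀ (i j : ℕ) (x : ExtQ T RT i) (y : ExtQ T RT j),
      x ∈ W i → y ∈ W j → μ i j x y ∈ W (i + j)) →
    ∀ n, W n = ⊤

/-- `E(M) = Ext^*_A(M,A_0)` is generated in degree `0` as a graded `E(A)`-module. -/
def ExtModGenInZero (RT : MinRes T) (RM : MinRes M)
    (μ : ∀ i j : ℕ, ExtQ T RT i →ₗ[F] ExtQ T RM j →ₗ[F] ExtQ T RM (i + j)) : Prop :=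
  ∀ W : (n : ℕ) → Submodule F (ExtQ T RM n),
    W 0 = ⊤ →
    (∀ (i j : ℕ) (x : ExtQ T RT i) (y : ExtQ T RM j),
      y ∈ W j → μ i j x y ∈ W (i + j)) →
    ∀ n, W n = ⊤

end Ext

/-- `JM` is (a graded module isomorphic to) the submodule `J·M` of `M`. -/
def IsJM (M JM : 𝒜.GMod) : Prop :=
  ∃ e : JM.M ≃ₗ[𝒜.A] ↥(𝒜.jideal • (⊤ : Submodule 𝒜.A M.M)),
    ∀ (j : ℤ) (x : JM.M), x ∈ JM.grading j ↔ ((e x : M.M) ∈ M.grading j)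

/-- `Q` is (a graded module isomorphic to) the quotient `M/JM`. -/
def IsQuotJM (M Q : 𝒜.GMod) : Prop :=
  ∃ e : Q.M ≃ₗ[𝒜.A] (M.M ⧸ (𝒜.jideal • (⊤ : Submodule 𝒜.A M.M))),
    ∀ j : ℤ, Q.grading j = Submodule.map
      ((e.symm.toLinearMap ∘ₗ (𝒜.jideal • (⊤ : Submodule 𝒜.A M.M)).mkQ).restrictScalars F)
      (M.grading j)

/-- `W` is (isomorphic to) the `n`-th syzygy `Ω^n(M)` of `M` in the minimal graded
projective resolution `R`. -/
def IsSyzygy {M : 𝒜.GMod} (R : MinRes M) : ℕ → 𝒜.GMod → Prop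
  | 0, W => ∃ e : W.M ≃ₗ[𝒜.A] M.M,
      ∀ (j : ℤ) (x : W.M), x ∈ W.grading j ↔ e x ∈ M.grading j
  | 1, W => ∃ e : W.M ≃ₗ[𝒜.A] ↥(LinearMap.ker R.aug.lin),
      ∀ (j : ℤ) (x : W.M), x ∈ W.grading j ↔ ((e x : (R.P 0).M) ∈ (R.P 0).grading j)
  | (n + 2), W => ∃ e : W.M ≃ₗ[𝒜.A] ↥(LinearMap.ker (R.d n).lin),
      ∀ (j : ℤ) (x : W.M), x ∈ W.grading j ↔ ((e x : (R.P (n + 1)).M) ∈ (R.P (n + 1)).grading j)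

end GradedAlg


namespace GradedAlg

section Helpers

variable {F : Type} [Field F] {𝒜 : GradedAlg F}

theorem gmod_ind (M : 𝒜.GMod) {motive : M.M → Prop}
    (mem : ∀ (j : ℤ), ∀ x ∈ M.grading j, motive x) (zero : motive 0)
    (add : ∀ x y, motive x → motive y → motive (x + y)) (x : M.M) : motive x := by
  have hx : x ∈ ⨆ j, M.grading j := by rw [M.sup_eq_top]; trivial
  exact Submodule.iSup_induction _ (motive := motive) hx mem zero add

theorem alg_ind {motive : 𝒜.A → Prop}
    (mem : ∀ (i : ℕ), ∀ a ∈ 𝒜.grading i, motive a) (zero : motive 0)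
    (add : ∀ x y, motive x → motive y → motive (x + y)) (a : 𝒜.A) : motive a := by
  have hx : a ∈ ⨆ j, 𝒜.grading j := by
    rw [(DirectSum.Decomposition.isInternal 𝒜.grading).submodule_iSup_eq_top]; trivial
  exact Submodule.iSup_induction _ (motive := motive) hx mem zero add

theorem exists_glue (M : 𝒜.GMod) {V : Type} [AddCommGroup V] [Module F V]
    (φ : ℤ → M.M →ₗ[F] V) :
    ∃ L : M.M →ₗ[F] V, ∀ j, ∀ x ∈ M.grading j, L x = φ j x := by
  classical
  have hint := DirectSum.isInternal_submodule_of_iSupIndep_of_iSup_eq_top M.indep M.sup_eq_top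
  let e := LinearEquiv.ofBijective (DirectSum.coeLinearMap M.grading) hint
  refine ⟨DirectSum.toModule F ℤ V (fun j => φ j ∘ₗ (M.grading j).subtype) ∘ₗ
    e.symm.toLinearMap, ?_⟩
  intro j x hx
  have h1 : e (DirectSum.lof F ℤ (fun j => M.grading j) j ⟨x, hx⟩) = x :=
    DirectSum.coeLinearMap_lof M.grading j ⟨x, hx⟩
  have h2 : e.symm x = DirectSum.lof F ℤ (fun j => M.grading j) j ⟨x, hx⟩ := by
    rw [LinearEquiv.symm_apply_eq, h1]
  simp only [LinearMap.comp_apply, LinearEquiv.coe_coe, h2, DirectSum.toModule_lof]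
  rfl

theorem exists_proj (M : 𝒜.GMod) (j : ℤ) :
    ∃ L : M.M →ₗ[F] M.M, ∀ k, ∀ x ∈ M.grading k, L x = if k = j then x else 0 := by
  classical
  obtain ⟨L, hL⟩ := exists_glue M (fun k => if k = j then LinearMap.id else 0)
  refine ⟨L, fun k x hx => ?_⟩
  rw [hL k x hx]
  split_ifs <;> rfl

/-- Projection onto a homogeneous component. -/
def pr (M : 𝒜.GMod) (j : ℤ) : M.M →ₗ[F] M.M := (exists_proj M j).choose

theorem pr_spec (M : 𝒜.GMod) (j k : ℤ) {x : M.M} (hx : x ∈ M.grading k) :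
    pr M j x = if k = j then x else 0 := (exists_proj M j).choose_spec k x hx

theorem pr_same (M : 𝒜.GMod) (j : ℤ) {x : M.M} (hx : x ∈ M.grading j) :
    pr M j x = x := by rw [pr_spec M j j hx, if_pos rfl]

theorem pr_ne (M : 𝒜.GMod) {j k : ℤ} (h : k ≠ j) {x : M.M} (hx : x ∈ M.grading k) :
    pr M j x = 0 := by rw [pr_spec M j k hx, if_neg h]

theorem pr_mem (M : 𝒜.GMod) (j : ℤ) (x : M.M) : pr M j x ∈ M.grading j := by
  induction x using gmod_ind with
  | mem k x hx =>
    rw [pr_spec M j k hx]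
    split_ifs with h
    · exact h ▸ hx
    · exact zero_mem _
  | zero => simp
  | add x y hx hy => rw [map_add]; exact add_mem hx hy

theorem pr_sum (M : 𝒜.GMod) (x : M.M) : ∃ t : Finset ℤ, x = ∑ j ∈ t, pr M j x := by
  classical
  have hx : x ∈ ⨆ j, M.grading j := by rw [M.sup_eq_top]; trivial
  obtain ⟨f, hf, hs⟩ := (Submodule.mem_iSup_iff_exists_finsupp _ _).1 hx
  refine ⟨f.support, ?_⟩
  have key : ∀ j ∈ f.support, pr M j x = f j := by
    intro j hj
    rw [← hs, Finsupp.sum, map_sum, Finset.sum_eq_single j]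
    · exact pr_same M j (hf j)
    · intro k _ hk
      exact pr_ne M hk (hf k)
    · intro h; exact absurd hj h
  rw [Finset.sum_congr rfl key]
  exact hs.symm

theorem pr_smul (M : 𝒜.GMod) {i : ℕ} {a : 𝒜.A} (ha : a ∈ 𝒜.grading i) (j : ℤ) (x : M.M) :
    pr M ((i : ℤ) + j) (a • x) = a • pr M j x := by
  induction x using gmod_ind with
  | mem k x hx =>
    rw [pr_spec M _ _ (M.smul_mem ha hx), pr_spec M j k hx]
    by_cases h : k = j
    · simp [h]
    · simp [h]
  | zero => simp
  | add x y hx hy => rw [smul_add, map_add, map_add, smul_add, hx, hy]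

theorem pr_hom {M N : 𝒜.GMod} (f : GHom M N) (j : ℤ) (x : M.M) :
    f.lin (pr M j x) = pr N j (f.lin x) := by
  induction x using gmod_ind with
  | mem k x hx =>
    rw [pr_spec M j k hx, pr_spec N j k (f.grad k x hx)]
    split_ifs <;> simp
  | zero => simp
  | add x y hx hy => rw [map_add, map_add, map_add, map_add, hx, hy]

/-- Degree zero part of a linear map. -/
theorem exists_degZero {M N : 𝒜.GMod} (h : M.M →ₗ[𝒜.A] N.M) :
    ∃ g : GHom M N, ∀ j, ∀ x ∈ M.grading j, g.lin x = pr N j (h x) := by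
  obtain ⟨L, hL⟩ := exists_glue M (fun j => pr N j ∘ₗ h.restrictScalars F)
  have hL' : ∀ j, ∀ x ∈ M.grading j, L x = pr N j (h x) := hL
  refine ⟨⟨{ toFun := L, map_add' := L.map_add, map_smul' := ?_ }, ?_⟩, hL'⟩
  · intro a x
    simp only [RingHom.id_apply]
    induction a using alg_ind with
    | mem i a ha =>
      induction x using gmod_ind with
      | mem j x hx =>
        rw [hL' _ _ (M.smul_mem ha hx), hL' _ _ hx, map_smul, pr_smul N ha]
      | zero => simp
      | add x y hx hy => rw [smul_add, map_add, map_add, smul_add, hx, hy]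
    | zero => simp
    | add a b ha hb => rw [add_smul, map_add, add_smul, ha, hb]
  · intro j x hx
    show L x ∈ _
    rw [hL' j x hx]
    exact pr_mem _ _ _

theorem exists_graded_lift {P X Y : 𝒜.GMod} (hP : Module.Projective 𝒜.A P.M)
    (q : GHom X Y) (hq : Function.Surjective q.lin) (f : GHom P Y) :
    ∃ h : GHom P X, ∀ x, q.lin (h.lin x) = f.lin x := by
  obtain ⟨h, hh⟩ := Module.projective_lifting_property q.lin f.lin hq
  obtain ⟨g, hg⟩ := exists_degZero h
  refine ⟨g, fun x => ?_⟩
  induction x using gmod_ind with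
  | mem j x hx =>
    rw [hg j x hx, pr_hom, ← LinearMap.comp_apply, hh, pr_same _ _ (f.grad j x hx)]
  | zero => simp
  | add x y hx hy => simp only [map_add, hx, hy]

theorem exists_sub (M : 𝒜.GMod) (W : Submodule 𝒜.A M.M)
    (hW : ∀ j, ∀ x ∈ W, pr M j x ∈ W) :
    ∃ (S : 𝒜.GMod) (ι : GHom S M), Function.Injective ι.lin ∧ LinearMap.range ι.lin = W ∧
      ∀ j x, ι.lin x ∈ M.grading j → x ∈ S.grading j := by
  let G : ℤ → Submodule F W := fun j => (M.grading j).comap (W.subtype.restrictScalars F)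
  have hG : ∀ j (x : W), x ∈ G j ↔ (x : M.M) ∈ M.grading j := fun j x => Iff.rfl
  have h1 : (⨆ j, G j) = ⊤ := by
    rw [eq_top_iff]
    rintro x -
    obtain ⟨t, ht⟩ := pr_sum M (x : M.M)
    have : x = ∑ j ∈ t, (⟨pr M j x, hW j x x.2⟩ : W) := by
      apply Subtype.ext
      rw [AddSubmonoidClass.coe_finsetSum]
      exact ht
    rw [this]
    refine Submodule.sum_mem _ fun j _ => ?_
    exact Submodule.mem_iSup_of_mem j ((hG j _).2 (pr_mem _ _ _))
  have h2 : iSupIndep G := by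
    rw [iSupIndep_def]
    intro j
    rw [Submodule.disjoint_def]
    intro x hx hx'
    have hz : pr M j (x : M.M) = 0 := by
      refine Submodule.iSup_induction _ (motive := fun x : W => pr M j (x : M.M) = 0) hx'
        ?_ (by simp) (fun x y hx hy => by simp [hx, hy])
      intro k x hx
      by_cases hk : k = j
      · simp [hk] at hx
        simp [hx]
      · simp only [ne_eq, hk, not_false_eq_true, iSup_pos] at hx
        exact pr_ne M hk hx
    rw [pr_same M j ((hG j x).1 hx)] at hz
    exact Subtype.ext hz
  refine ⟨{ M := W, grading := G, sup_eq_top := h1, indep := h2,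
            smul_mem := fun ha hm => M.smul_mem ha hm }, ⟨W.subtype, fun j x hx => hx⟩,
    Subtype.val_injective, W.range_subtype, fun j x hx => hx⟩

theorem exists_ker {M N : 𝒜.GMod} (f : GHom M N) :
    ∃ (S : 𝒜.GMod) (ι : GHom S M), Function.Injective ι.lin ∧
      LinearMap.range ι.lin = LinearMap.ker f.lin ∧
      ∀ j x, ι.lin x ∈ M.grading j → x ∈ S.grading j := by
  apply exists_sub
  intro j x hx
  rw [LinearMap.mem_ker] at hx ⊢
  rw [pr_hom, hx, map_zero]

/-- Lifting through a graded embedding. -/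
theorem exists_cod {X S M : 𝒜.GMod} (ι : GHom S M) (hι : Function.Injective ι.lin)
    (hgr : ∀ j x, ι.lin x ∈ M.grading j → x ∈ S.grading j) (h : GHom X M)
    (hr : ∀ x, h.lin x ∈ LinearMap.range ι.lin) :
    ∃ h' : GHom X S, ∀ x, ι.lin (h'.lin x) = h.lin x := by
  choose k hk using hr
  refine ⟨⟨{ toFun := k, map_add' := ?_, map_smul' := ?_ }, ?_⟩, hk⟩
  · intro x y
    apply hι
    rw [map_add, hk, hk, hk, map_add]
  · intro a x
    apply hι
    simp only [RingHom.id_apply]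
    rw [map_smul, hk, hk, map_smul]
  · intro j x hx
    apply hgr
    show ι.lin (k x) ∈ _
    rw [hk]
    exact h.grad j x hx

theorem mem_jideal (a : 𝒜.A) : a ∈ 𝒜.jideal ↔ GradedRing.projZeroRingHom 𝒜.grading a = 0 := by
  exact HomogeneousIdeal.mem_irrelevant_iff 𝒜.grading a

theorem pz_same {a : 𝒜.A} (ha : a ∈ 𝒜.grading 0) :
    GradedRing.projZeroRingHom 𝒜.grading a = a := by
  rw [GradedRing.projZeroRingHom_apply, DirectSum.decompose_of_mem_same _ ha]

theorem pz_ne {a : 𝒜.A} {i : ℕ} (hi : i ≠ 0) (ha : a ∈ 𝒜.grading i) :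
    GradedRing.projZeroRingHom 𝒜.grading a = 0 := by
  rw [GradedRing.projZeroRingHom_apply, DirectSum.decompose_of_mem_ne _ ha hi]

theorem pz_mem (a : 𝒜.A) : GradedRing.projZeroRingHom 𝒜.grading a ∈ 𝒜.grading 0 := by
  rw [GradedRing.projZeroRingHom_apply]
  exact SetLike.coe_mem _

theorem sub_pz_mem (a : 𝒜.A) : a - GradedRing.projZeroRingHom 𝒜.grading a ∈ 𝒜.jideal := by
  rw [mem_jideal, map_sub, pz_same (pz_mem a), sub_self]

theorem pr_below {M : 𝒜.GMod} {s : ℤ} (hs : M.GenInDeg s) {j : ℤ} (hj : j < s) (x : M.M) :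
    pr M j x = 0 := by
  have hx : x ∈ Submodule.span 𝒜.A (M.grading s : Set M.M) := by rw [hs]; trivial
  induction hx using Submodule.span_induction generalizing j with
  | mem x hx => exact pr_ne M (by omega) hx
  | zero => simp
  | add x y _ _ hx hy => rw [map_add, hx hj, hy hj, add_zero]
  | smul a x _ hx =>
    induction a using alg_ind with
    | mem i a ha =>
      have := pr_smul M ha (j - i) x
      rw [add_sub_cancel] at this
      rw [this, hx (by omega), smul_zero]
    | zero => simp
    | add a b ha hb => rw [add_smul, map_add, ha, hb, add_zero]

theorem pr_smul_bot {M : 𝒜.GMod} {s : ℤ} (hs : M.GenInDeg s) (a : 𝒜.A) (x : M.M) :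
    pr M s (a • x) = GradedRing.projZeroRingHom 𝒜.grading a • pr M s x := by
  induction a using alg_ind with
  | mem i a ha =>
    have := pr_smul M ha (s - i) x
    rw [add_sub_cancel] at this
    rw [this]
    by_cases hi : i = 0
    · subst hi
      rw [pz_same ha]
      simp
    · rw [pz_ne hi ha, zero_smul, pr_below hs (by omega), smul_zero]
  | zero => simp
  | add a b ha hb => rw [add_smul, map_add, ha, hb, map_add, add_smul]

theorem pr_of_mem_J {M : 𝒜.GMod} {s : ℤ} (hs : M.GenInDeg s) {x : M.M}
    (hx : x ∈ 𝒜.jideal • (⊤ : Submodule 𝒜.A M.M)) : pr M s x = 0 := by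
  refine Submodule.smul_induction_on (p := fun x => pr M s x = 0) hx ?_ ?_
  · intro a ha y _
    rw [pr_smul_bot hs, (mem_jideal a).1 ha, zero_smul]
  · intro x y hx hy
    rw [map_add, hx, hy, add_zero]

theorem sub_pr_mem_J {M : 𝒜.GMod} {s : ℤ} (hs : M.GenInDeg s) (x : M.M) :
    x - pr M s x ∈ 𝒜.jideal • (⊤ : Submodule 𝒜.A M.M) := by
  have hx : x ∈ Submodule.span 𝒜.A (M.grading s : Set M.M) := by rw [hs]; trivial
  induction hx using Submodule.span_induction with
  | mem x hx => rw [pr_same M s hx, sub_self]; exact zero_mem _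
  | zero => simp
  | add x y _ _ hx hy =>
    have : x + y - pr M s (x + y) = (x - pr M s x) + (y - pr M s y) := by
      rw [map_add]; abel
    rw [this]
    exact add_mem hx hy
  | smul a x _ hx =>
    have : a • x - pr M s (a • x) = (a - GradedRing.projZeroRingHom 𝒜.grading a) • x +
        GradedRing.projZeroRingHom 𝒜.grading a • (x - pr M s x) := by
      rw [pr_smul_bot hs, sub_smul, smul_sub]; abel
    rw [this]
    exact add_mem (Submodule.smul_mem_smul (sub_pz_mem a) trivial) (Submodule.smul_mem _ _ hx)

theorem map_J {M N : 𝒜.GMod} (f : M.M →ₗ[𝒜.A] N.M) {x : M.M}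
    (hx : x ∈ 𝒜.jideal • (⊤ : Submodule 𝒜.A M.M)) :
    f x ∈ 𝒜.jideal • (⊤ : Submodule 𝒜.A N.M) := by
  refine Submodule.smul_induction_on
    (p := fun x => f x ∈ 𝒜.jideal • (⊤ : Submodule 𝒜.A N.M)) hx ?_ ?_
  · intro a ha y _
    rw [map_smul]
    exact Submodule.smul_mem_smul ha trivial
  · intro x y hx hy
    rw [map_add]
    exact add_mem hx hy

/-- `M / J M` is a semisimple module. -/
theorem semisimple_top (hA : 𝒜.Standing) (M : 𝒜.GMod) :
    IsSemisimpleModule 𝒜.A (M.M ⧸ 𝒜.jideal • (⊤ : Submodule 𝒜.A M.M)) := by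
  haveI := hA.semisimple
  letI inst : Module (𝒜.grading 0) (M.M ⧸ 𝒜.jideal • (⊤ : Submodule 𝒜.A M.M)) :=
    Module.compHom _ (SetLike.GradeZero.subring 𝒜.grading).subtype
  haveI : RingHomSurjective (GradedRing.projZeroRingHom' 𝒜.grading) :=
    ⟨GradedRing.projZeroRingHom'_surjective 𝒜.grading⟩
  let l : (M.M ⧸ 𝒜.jideal • (⊤ : Submodule 𝒜.A M.M))
      →ₛₗ[GradedRing.projZeroRingHom' 𝒜.grading]
      (M.M ⧸ 𝒜.jideal • (⊤ : Submodule 𝒜.A M.M)) :=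
    { toFun := id
      map_add' := fun _ _ => rfl
      map_smul' := by
        intro a x
        obtain ⟨x, rfl⟩ := Submodule.mkQ_surjective _ x
        show a • _ = GradedRing.projZeroRingHom 𝒜.grading a • Submodule.mkQ _ x
        rw [← sub_eq_zero, ← sub_smul, ← map_smul, Submodule.mkQ_apply,
          Submodule.Quotient.mk_eq_zero]
        exact Submodule.smul_mem_smul (sub_pz_mem a) trivial }
  rw [l.isSemisimpleModule_iff_of_bijective Function.bijective_id]
  infer_instance

theorem exists_retraction (hA : 𝒜.Standing) {P Q : 𝒜.GMod} {s : ℤ} (hP : P.GenInDeg s)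
    (hQ : Q.GenInDeg s) (hproj : Module.Projective 𝒜.A Q.M) (φ : GHom P Q)
    (hinj : ∀ x ∈ P.grading s, φ.lin x = 0 → x = 0) :
    ∃ ψ : GHom Q P, ∀ x, ψ.lin (φ.lin x) = x := by
  let JP := 𝒜.jideal • (⊤ : Submodule 𝒜.A P.M)
  let JQ := 𝒜.jideal • (⊤ : Submodule 𝒜.A Q.M)
  let φb : (P.M ⧸ JP) →ₗ[𝒜.A] (Q.M ⧸ JQ) :=
    JP.mapQ JQ φ.lin (fun x hx => map_J φ.lin hx)
  have hφb : Function.Injective φb := by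
    rw [injective_iff_map_eq_zero]
    intro x hx
    obtain ⟨x, rfl⟩ := Submodule.mkQ_surjective _ x
    have h1 : φ.lin x ∈ JQ := by
      rw [← Submodule.Quotient.mk_eq_zero]
      exact hx
    have h2 : pr P s x = 0 := by
      apply hinj _ (pr_mem _ _ _)
      rw [pr_hom]
      exact pr_of_mem_J hQ h1
    have h3 := sub_pr_mem_J hP x
    rw [h2, sub_zero] at h3
    exact (Submodule.Quotient.mk_eq_zero _).2 h3
  haveI := semisimple_top hA Q
  haveI : IsSemisimpleModule 𝒜.A (Q.M ⧸ JQ) := semisimple_top hA Q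
  obtain ⟨r, hr⟩ := IsSemisimpleModule.extension_property φb hφb LinearMap.id
  obtain ⟨ψ', hψ'⟩ := Module.projective_lifting_property JP.mkQ (r ∘ₗ JQ.mkQ)
    (Submodule.mkQ_surjective _)
  obtain ⟨ψ, hψ⟩ := exists_degZero ψ'
  refine ⟨ψ, fun x => ?_⟩
  have hx : x ∈ Submodule.span 𝒜.A (P.grading s : Set P.M) := by rw [hP]; trivial
  induction hx using Submodule.span_induction with
  | mem x hx =>
    rw [hψ s _ (φ.grad s x hx)]
    have h1 : JP.mkQ (ψ' (φ.lin x)) = JP.mkQ x := by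
      have := LinearMap.congr_fun hψ' (φ.lin x)
      rw [LinearMap.comp_apply] at this
      rw [this]
      exact LinearMap.congr_fun hr (JP.mkQ x)
    have h2 : ψ' (φ.lin x) - x ∈ JP := by
      rw [← Submodule.Quotient.mk_eq_zero, Submodule.Quotient.mk_sub, sub_eq_zero]
      exact h1
    have h3 := pr_of_mem_J hP h2
    rw [map_sub, sub_eq_zero, pr_same P s hx] at h3
    exact h3
  | zero => simp
  | add x y _ _ hx hy => rw [map_add, map_add, hx, hy]
  | smul a x _ hx => rw [map_smul, map_smul, hx]

/-- The degree-controlled resolutions. -/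
def HasRes (δ : ℕ → ℤ) (n : ℕ) (M : 𝒜.GMod) : Prop :=
  ∃ R : MinRes M, ∀ k : ℕ, (R.P k).GenInDeg (δ (n + k))

/-- Unfold one step of a resolution. -/
theorem HasRes.step {δ : ℕ → ℤ} {n : ℕ} {M : 𝒜.GMod} (h : HasRes δ n M) :
    ∃ (P S : 𝒜.GMod) (a : GHom P M) (ι : GHom S P),
      Module.Finite 𝒜.A P.M ∧ Module.Projective 𝒜.A P.M ∧ P.GenInDeg (δ n) ∧
      Function.Surjective a.lin ∧ Function.Injective ι.lin ∧
      LinearMap.range ι.lin = LinearMap.ker a.lin ∧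
      LinearMap.ker a.lin ≤ 𝒜.jideal • (⊤ : Submodule 𝒜.A P.M) ∧
      (∀ j x, ι.lin x ∈ P.grading j → x ∈ S.grading j) ∧ HasRes δ (n + 1) S := by
  obtain ⟨R, hR⟩ := h
  obtain ⟨S, ι, hι, hr, hgr⟩ := exists_ker R.aug
  obtain ⟨d', hd'⟩ := exists_cod ι hι hgr (R.d 0) (fun x => by
    rw [hr, ← R.exact_aug]; exact ⟨x, rfl⟩)
  refine ⟨R.P 0, S, R.aug, ι, R.fg 0, R.projective 0, hR 0, R.aug_surj, hι, hr,
    R.exact_aug ▸ R.minimal 0, hgr, ⟨{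
      P := fun k => R.P (k + 1)
      d := fun k => R.d (k + 1)
      aug := d'
      fg := fun k => R.fg _
      projective := fun k => R.projective _
      aug_surj := ?_
      exact_aug := ?_
      exact := fun k => R.exact _
      minimal := fun k => R.minimal _ }, ?_⟩⟩
  · intro y
    have : ι.lin y ∈ LinearMap.range (R.d 0).lin := by
      rw [R.exact_aug, ← hr]; exact ⟨y, rfl⟩
    obtain ⟨x, hx⟩ := this
    exact ⟨x, hι (by rw [hd', hx])⟩
  · rw [R.exact 0]
    ext x
    rw [LinearMap.mem_ker, LinearMap.mem_ker, ← hd', map_eq_zero_iff _ hι]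
  · intro k
    have := hR (k + 1)
    rwa [show n + (k + 1) = n + 1 + k by ring] at this

/-- Coinductive construction of a resolution. -/
theorem hasRes_of_step (δ : ℕ → ℤ) (Good : ℕ → 𝒜.GMod → Prop)
    (step : ∀ n N, Good n N → ∃ (P S : 𝒜.GMod) (a : GHom P N) (ι : GHom S P),
      Module.Finite 𝒜.A P.M ∧ Module.Projective 𝒜.A P.M ∧ P.GenInDeg (δ n) ∧
      Function.Surjective a.lin ∧ Function.Injective ι.lin ∧
      LinearMap.range ι.lin = LinearMap.ker a.lin ∧
      LinearMap.ker a.lin ≤ 𝒜.jideal • (⊤ : Submodule 𝒜.A P.M) ∧ Good (n + 1) S)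
    (N : 𝒜.GMod) (hN : Good 0 N) :
    ∃ R : MinRes N, ∀ k : ℕ, (R.P k).GenInDeg (δ k) := by
  choose P S a ι hfg hpr hgen hsurj hinj hrange hmin hgood using step
  let X : (n : ℕ) → {N : 𝒜.GMod // Good n N} := fun n =>
    Nat.rec ⟨N, hN⟩ (fun n x => ⟨S n x.1 x.2, hgood n x.1 x.2⟩) n
  let PP : ℕ → 𝒜.GMod := fun n => P n (X n).1 (X n).2
  let α : ∀ n, GHom (PP n) (X n).1 := fun n => a n (X n).1 (X n).2
  let β : ∀ n, GHom (X (n + 1)).1 (PP n) := fun n => ι n (X n).1 (X n).2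
  have hα : ∀ n, Function.Surjective (α n).lin := fun n => hsurj n _ _
  have hβ : ∀ n, Function.Injective (β n).lin := fun n => hinj n _ _
  have hαβ : ∀ n, LinearMap.range (β n).lin = LinearMap.ker (α n).lin := fun n => hrange n _ _
  have hm : ∀ n, LinearMap.ker (α n).lin ≤ 𝒜.jideal • (⊤ : Submodule 𝒜.A (PP n).M) :=
    fun n => hmin n _ _
  let D : ∀ n, GHom (PP (n + 1)) (PP n) := fun n =>
    ⟨(β n).lin ∘ₗ (α (n + 1)).lin, fun j x hx => (β n).grad j _ ((α (n + 1)).grad j x hx)⟩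
  have hDr : ∀ n, LinearMap.range (D n).lin = LinearMap.ker (α n).lin := fun n => by
    rw [← hαβ n]
    exact LinearMap.range_comp_of_range_eq_top _ (LinearMap.range_eq_top.2 (hα (n + 1)))
  have hDk : ∀ n, LinearMap.ker (D n).lin = LinearMap.ker (α (n + 1)).lin := fun n =>
    LinearMap.ker_comp_of_ker_eq_bot _ (LinearMap.ker_eq_bot.2 (hβ n))
  exact ⟨{
    P := PP
    d := D
    aug := α 0
    fg := fun n => hfg n _ _
    projective := fun n => hpr n _ _
    aug_surj := hα 0
    exact_aug := hDr 0
    exact := fun n => by rw [hDr, hDk]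
    minimal := fun n => by rw [hDr]; exact hm n }, fun n => hgen n _ _⟩

/-- Cokernels of injections between modules with degree-controlled resolutions. -/
def Good (δ : ℕ → ℤ) (n : ℕ) (N : 𝒜.GMod) : Prop :=
  ∃ (K M : 𝒜.GMod) (f : GHom K M) (g : GHom M N),
    Function.Injective f.lin ∧ Function.Surjective g.lin ∧
    LinearMap.range f.lin = LinearMap.ker g.lin ∧ HasRes δ n K ∧ HasRes δ n M

theorem genInDeg_of_surj {M N : 𝒜.GMod} {s : ℤ} (h : M.GenInDeg s) (π : GHom M N)
    (hπ : Function.Surjective π.lin) : N.GenInDeg s := by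
  unfold GMod.GenInDeg at *
  rw [eq_top_iff, ← LinearMap.range_eq_top.2 hπ, LinearMap.range_eq_map, ← h,
    Submodule.map_span]
  apply Submodule.span_mono
  rintro _ ⟨x, hx, rfl⟩
  exact π.grad s x hx

theorem good_step (hA : 𝒜.Standing) (δ : ℕ → ℤ) (n : ℕ) (N : 𝒜.GMod) (h : Good δ n N) :
    ∃ (P S : 𝒜.GMod) (a : GHom P N) (ι : GHom S P),
      Module.Finite 𝒜.A P.M ∧ Module.Projective 𝒜.A P.M ∧ P.GenInDeg (δ n) ∧
      Function.Surjective a.lin ∧ Function.Injective ι.lin ∧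
      LinearMap.range ι.lin = LinearMap.ker a.lin ∧
      LinearMap.ker a.lin ≤ 𝒜.jideal • (⊤ : Submodule 𝒜.A P.M) ∧ Good δ (n + 1) S := by
  obtain ⟨K, M, f, g, hf, hg, hfg, hK, hM⟩ := h
  obtain ⟨PK, SK, aK, ιK, finK, projK, genK, surjK, injK, rK, minK, grK, resK⟩ := hK.step
  obtain ⟨PM, SM, aM, ιM, finM, projM, genM, surjM, injM, rM, minM, grM, resM⟩ := hM.step
  have hgf : ∀ k, g.lin (f.lin k) = 0 := fun k => by
    rw [← LinearMap.mem_ker, ← hfg]; exact ⟨k, rfl⟩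
  have haι : ∀ z, aM.lin (ιM.lin z) = 0 := fun k => by
    rw [← LinearMap.mem_ker, ← rM]; exact ⟨k, rfl⟩
  have haιK : ∀ z, aK.lin (ιK.lin z) = 0 := fun k => by
    rw [← LinearMap.mem_ker, ← rK]; exact ⟨k, rfl⟩
  -- lift `f`
  obtain ⟨φ, hφ⟩ := exists_graded_lift projK aM surjM
    (⟨f.lin ∘ₗ aK.lin, fun j x hx => f.grad j _ (aK.grad j x hx)⟩ : GHom PK M)
  replace hφ : ∀ x, aM.lin (φ.lin x) = f.lin (aK.lin x) := hφ
  obtain ⟨ψ, hψ⟩ := exists_retraction hA genK genM projM φ (by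
    intro x hx h0
    have h1 : aK.lin x = 0 := by
      apply hf
      rw [← hφ, h0, map_zero, map_zero]
    have h2 := pr_of_mem_J genK (minK h1)
    rwa [pr_same _ _ hx] at h2)
  obtain ⟨P, i, hi, ri, gri⟩ := exists_ker ψ
  have hψi : ∀ z, ψ.lin (i.lin z) = 0 := fun k => by
    rw [← LinearMap.mem_ker, ← ri]; exact ⟨k, rfl⟩
  obtain ⟨π, hπ⟩ := exists_cod i hi gri
    (⟨LinearMap.id - φ.lin ∘ₗ ψ.lin, fun j x hx =>
      sub_mem hx (φ.grad j _ (ψ.grad j x hx))⟩ : GHom PM PM) (by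
      intro x
      rw [ri]
      simp [hψ])
  replace hπ : ∀ x, i.lin (π.lin x) = x - φ.lin (ψ.lin x) := hπ
  have hπi : ∀ z, π.lin (i.lin z) = z := fun z => hi (by rw [hπ, hψi, map_zero, sub_zero])
  have hπs : Function.Surjective π.lin := fun z => ⟨_, hπi z⟩
  have hπφ : ∀ y, π.lin (φ.lin y) = 0 := fun y => hi (by rw [hπ, hψ, sub_self, map_zero])
  let a : GHom P N := ⟨g.lin ∘ₗ aM.lin ∘ₗ i.lin, fun j x hx =>
    g.grad j _ (aM.grad j _ (i.grad j x hx))⟩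
  have ha : ∀ x, a.lin x = g.lin (aM.lin (i.lin x)) := fun x => rfl
  have haπ : ∀ x, a.lin (π.lin x) = g.lin (aM.lin x) := fun x => by
    rw [ha, hπ, map_sub, map_sub, hφ, hgf, sub_zero]
  -- elements of the kernel
  have hker : ∀ x, a.lin x = 0 → ∃ z, x = π.lin (ιM.lin z) := by
    intro x hx
    have h1 : aM.lin (i.lin x) ∈ LinearMap.range f.lin := by rw [hfg]; exact hx
    obtain ⟨k, hk⟩ := h1
    obtain ⟨y, rfl⟩ := surjK k
    have h2 : i.lin x - φ.lin y ∈ LinearMap.range ιM.lin := by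
      rw [rM, LinearMap.mem_ker, map_sub, hφ, hk, sub_self]
    obtain ⟨z, hz⟩ := h2
    exact ⟨z, by rw [hz, map_sub, hπi, hπφ, sub_zero]⟩
  obtain ⟨S, ι, hι, rι, grι⟩ := exists_ker a
  have haιS : ∀ z, a.lin (ι.lin z) = 0 := fun k => by
    rw [← LinearMap.mem_ker, ← rι]; exact ⟨k, rfl⟩
  refine ⟨P, S, a, ι, Module.Finite.of_surjective π.lin hπs, ?_, genInDeg_of_surj genM π hπs,
    ?_, hι, rι, ?_, ?_⟩
  · exact Module.Projective.of_split i.lin π.lin (LinearMap.ext hπi)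
  · intro y
    obtain ⟨m, rfl⟩ := hg y
    obtain ⟨x, rfl⟩ := surjM m
    exact ⟨π.lin x, haπ x⟩
  · intro x hx
    obtain ⟨z, rfl⟩ := hker x hx
    exact map_J _ (minM (haι z))
  · obtain ⟨f', hf'⟩ := exists_cod ιM injM grM
      (⟨φ.lin ∘ₗ ιK.lin, fun j x hx => φ.grad j _ (ιK.grad j x hx)⟩ : GHom SK PM) (by
        intro x
        rw [rM, LinearMap.mem_ker]
        show aM.lin (φ.lin (ιK.lin x)) = 0
        rw [hφ, haιK, map_zero])
    replace hf' : ∀ x, ιM.lin (f'.lin x) = φ.lin (ιK.lin x) := hf'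
    obtain ⟨g', hg'⟩ := exists_cod ι hι grι
      (⟨π.lin ∘ₗ ιM.lin, fun j x hx => π.grad j _ (ιM.grad j x hx)⟩ : GHom SM P) (by
        intro x
        rw [rι, LinearMap.mem_ker]
        show a.lin (π.lin (ιM.lin x)) = 0
        rw [haπ, haι, map_zero])
    replace hg' : ∀ x, ι.lin (g'.lin x) = π.lin (ιM.lin x) := hg'
    refine ⟨SK, SM, f', g', ?_, ?_, ?_, resK, resM⟩
    · intro x y hxy
      apply injK
      rw [← hψ (ιK.lin x), ← hψ (ιK.lin y), ← hf', ← hf', hxy]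
    · intro y
      obtain ⟨z, hz⟩ := hker _ (haιS y)
      exact ⟨z, hι (by rw [hg', hz])⟩
    · ext z
      rw [LinearMap.mem_ker]
      constructor
      · rintro ⟨x, rfl⟩
        apply hι
        rw [hg', hf', hπφ, map_zero]
      · intro hz
        have h1 : ιM.lin z - φ.lin (ψ.lin (ιM.lin z)) = 0 := by
          rw [← hπ, ← hg', hz, map_zero, map_zero]
        rw [sub_eq_zero] at h1
        have h2 : ψ.lin (ιM.lin z) ∈ LinearMap.range ιK.lin := by
          rw [rK, LinearMap.mem_ker]
          apply hf
          rw [← hφ, ← h1, haι, map_zero]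
        obtain ⟨y, hy⟩ := h2
        exact ⟨y, injM (by rw [hf', hy, ← h1])⟩

end Helpers

end GradedAlg

open GradedAlg in
/-- **Proposition (cokernel closure).** Let `0 → K → M → N → 0` be a short exact
sequence of finitely generated graded `A`-modules over a piecewise-Koszul algebra `A`.
If `K` and `M` are piecewise-Koszul modules generated in the same degree `s`, then
`N ≅ M/K` is a piecewise-Koszul module. -/
theorem isPKMod_of_cokernel
    {F : Type} [Field F] (𝒜 : GradedAlg F) (hA : 𝒜.Standing)
    (p d : ℕ) (hp : 2 ≤ p) (hpd : p ≤ d)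
    (T : 𝒜.GMod) (hT : IsTrivialGMod T) (hpk : 𝒜.IsPKAlg p d T)
    (K M N : 𝒜.GMod)
    (hKfg : Module.Finite 𝒜.A K.M) (hMfg : Module.Finite 𝒜.A M.M)
    (hNfg : Module.Finite 𝒜.A N.M)
    (f : GHom K M) (g : GHom M N)
    (hf : Function.Injective f.lin) (hg : Function.Surjective g.lin)
    (hexact : LinearMap.range f.lin = LinearMap.ker g.lin)
    (s : ℤ) (hKs : K.GenInDeg s) (hMs : M.GenInDeg s)
    (hK : 𝒜.IsPKMod p d s K) (hM : 𝒜.IsPKMod p d s M) :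
    𝒜.IsPKMod p d s N := by
  refine hasRes_of_step (fun n => (jump d p n : ℤ) + s) (Good fun n => (jump d p n : ℤ) + s)
    (good_step hA _) N ⟨K, M, f, g, hf, hg, hexact, ?_, ?_⟩
  · obtain ⟨R, hR⟩ := hK
    exact ⟨R, fun k => by rw [Nat.zero_add]; exact hR k⟩
  · obtain ⟨R, hR⟩ := hM
    exact ⟨R, fun k => by rw [Nat.zero_add]; exact hR k⟩
end
end

section
/- Let Γ be the quiver with vertices 1,2,3,4,5 and arrows α_1: 1→2, α_2, α_3: 2→3, α_4, α_5, α_6: 3→4, α_7: 4→5, and let A = FΓ/R be the quotient of the path algebra FΓ by the ideal R generated by the relations α_1α_2 − α_1α_3, α_4α_7 − α_5α_7, α_5α_7 − α_6α_7, α_2α_4, α_3α_6. Then A is a piecewise-Koszul algebra with period p = 3 and jump degree d = 4; that is, the trivial A-module A_0 admits a minimal graded projective resolution whose n-th term is generated in degree δ^4_3(n). -/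
noncomputable section

namespace Stmt11

variable (F : Type) [Field F]

/-- The generators of the path algebra of the quiver `Γ`: five trivial paths
(one for each vertex) and seven arrows `α₁, …, α₇`. -/
abbrev X : Type := Sum (Fin 5) (Fin 7)

/-- the trivial path at vertex `i` -/
def e (i : Fin 5) : FreeAlgebra F (X) := FreeAlgebra.ι F (Sum.inl i)

/-- the arrow `α_{k+1}` -/
def a (k : Fin 7) : FreeAlgebra F (X) := FreeAlgebra.ι F (Sum.inr k)

/-- sources of the arrows `α₁, …, α₇`: `1→2`, `2→3`, `2→3`, `3→4`, `3→4`, `3→4`, `4→5`. -/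
def src : Fin 7 → Fin 5 := ![0, 1, 1, 2, 2, 2, 3]

/-- targets of the arrows `α₁, …, α₇` -/
def tgt : Fin 7 → Fin 5 := ![1, 2, 2, 3, 3, 3, 4]

/-- The defining relations of `A = FΓ/R`: the path-algebra relations of `Γ` (the trivial
paths are orthogonal idempotents summing to `1` and the arrows are concentrated between
their endpoints), together with the relations generating `R`:
`α₁α₂ − α₁α₃`, `α₄α₇ − α₅α₇`, `α₅α₇ − α₆α₇`, `α₂α₄`, `α₃α₆`. -/
inductive Rel : FreeAlgebra F X → FreeAlgebra F X → Prop
  | ortho (i j : Fin 5) : Rel (e F i * e F j) (if i = j then e F i else 0)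
  | total : Rel (∑ i : Fin 5, e F i) 1
  | src_arrow (k : Fin 7) : Rel (e F (src k) * a F k) (a F k)
  | arrow_tgt (k : Fin 7) : Rel (a F k * e F (tgt k)) (a F k)
  | rel1 : Rel (a F 0 * a F 1) (a F 0 * a F 2)
  | rel2 : Rel (a F 3 * a F 6) (a F 4 * a F 6)
  | rel3 : Rel (a F 4 * a F 6) (a F 5 * a F 6)
  | rel4 : Rel (a F 1 * a F 3) 0
  | rel5 : Rel (a F 2 * a F 5) 0

/-- The algebra `A = FΓ/R`. -/
abbrev PathAlg := RingQuot (Rel F)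

/-- the canonical projection `FΓ → A` -/
def π : FreeAlgebra F X →ₐ[F] PathAlg F := RingQuot.mkAlgHom F (Rel F)

/-- the length (number of arrows) of a word in the generators -/
def wordDeg (l : List X) : ℕ := (l.filter Sum.isRight).length

/-- The degree-`n` component of `A = FΓ/R` (grading by path length): the span of the
images of all products of generators containing exactly `n` arrows. -/
def pathGrading (n : ℕ) : Submodule F (PathAlg F) :=
  Submodule.span F
    {y | ∃ l : List X, wordDeg l = n ∧ y = π F ((l.map (FreeAlgebra.ι F)).prod)}

end Stmt11

namespace PK

/-- An explicit 19-dimensional model of the algebra. -/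
@[ext] structure B (F : Type) where
  e0 : F
  e1 : F
  e2 : F
  e3 : F
  e4 : F
  a0 : F
  a1 : F
  a2 : F
  a3 : F
  a4 : F
  a5 : F
  a6 : F
  p : F
  q14 : F
  q15 : F
  q23 : F
  q24 : F
  r : F
  t : F

namespace B

variable {F : Type} [Field F]

instance : Zero (B F) where
  zero := ⟨0, 0, 0, 0, 0, 0, 0, 0, 0, 0, 0, 0, 0, 0, 0, 0, 0, 0, 0⟩

instance : One (B F) where
  one := ⟨1, 1, 1, 1, 1, 0, 0, 0, 0, 0, 0, 0, 0, 0, 0, 0, 0, 0, 0⟩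

instance : Add (B F) where
  add x y := ⟨x.e0 + y.e0, x.e1 + y.e1, x.e2 + y.e2, x.e3 + y.e3, x.e4 + y.e4, x.a0 + y.a0, x.a1 + y.a1,
    x.a2 + y.a2, x.a3 + y.a3, x.a4 + y.a4, x.a5 + y.a5, x.a6 + y.a6, x.p + y.p,
    x.q14 + y.q14, x.q15 + y.q15, x.q23 + y.q23, x.q24 + y.q24, x.r + y.r, x.t + y.t⟩

instance : Neg (B F) where
  neg x := ⟨-x.e0, -x.e1, -x.e2, -x.e3, -x.e4, -x.a0, -x.a1, -x.a2, -x.a3, -x.a4, -x.a5, -x.a6, -x.p,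
    -x.q14, -x.q15, -x.q23, -x.q24, -x.r, -x.t⟩

instance : Mul (B F) where
  mul x y := ⟨x.e0 * y.e0, x.e1 * y.e1, x.e2 * y.e2, x.e3 * y.e3, x.e4 * y.e4, x.e0 * y.a0 + x.a0 * y.e1,
    x.e1 * y.a1 + x.a1 * y.e2, x.e1 * y.a2 + x.a2 * y.e2, x.e2 * y.a3 + x.a3 * y.e3,
    x.e2 * y.a4 + x.a4 * y.e3, x.e2 * y.a5 + x.a5 * y.e3, x.e3 * y.a6 + x.a6 * y.e4,
    x.e0 * y.p + x.p * y.e2 + x.a0 * (y.a1 + y.a2),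
    x.e1 * y.q14 + x.q14 * y.e3 + x.a1 * y.a4, x.e1 * y.q15 + x.q15 * y.e3 + x.a1 * y.a5,
    x.e1 * y.q23 + x.q23 * y.e3 + x.a2 * y.a3, x.e1 * y.q24 + x.q24 * y.e3 + x.a2 * y.a4,
    x.e2 * y.r + x.r * y.e4 + (x.a3 + x.a4 + x.a5) * y.a6,
    x.e0 * y.t + x.t * y.e3 + x.a0 * (y.q14 + y.q24) + x.p * y.a4⟩

instance : SMul F (B F) where
  smul c x := ⟨c * x.e0, c * x.e1, c * x.e2, c * x.e3, c * x.e4, c * x.a0, c * x.a1, c * x.a2, c * x.a3,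
    c * x.a4, c * x.a5, c * x.a6, c * x.p, c * x.q14, c * x.q15, c * x.q23, c * x.q24,
    c * x.r, c * x.t⟩

@[simp] theorem zero_e0 : (0 : B F).e0 = 0 := rfl
@[simp] theorem one_e0 : (1 : B F).e0 = 1 := rfl
@[simp] theorem add_e0 (x y : B F) : (x + y).e0 = x.e0 + y.e0 := rfl
@[simp] theorem neg_e0 (x : B F) : (-x).e0 = -x.e0 := rfl
@[simp] theorem mul_e0 (x y : B F) :
    (x * y).e0 = x.e0 * y.e0 := rfl
@[simp] theorem smul_e0 (c : F) (x : B F) : (c • x).e0 = c * x.e0 := rfl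
@[simp] theorem zero_e1 : (0 : B F).e1 = 0 := rfl
@[simp] theorem one_e1 : (1 : B F).e1 = 1 := rfl
@[simp] theorem add_e1 (x y : B F) : (x + y).e1 = x.e1 + y.e1 := rfl
@[simp] theorem neg_e1 (x : B F) : (-x).e1 = -x.e1 := rfl
@[simp] theorem mul_e1 (x y : B F) :
    (x * y).e1 = x.e1 * y.e1 := rfl
@[simp] theorem smul_e1 (c : F) (x : B F) : (c • x).e1 = c * x.e1 := rfl
@[simp] theorem zero_e2 : (0 : B F).e2 = 0 := rfl
@[simp] theorem one_e2 : (1 : B F).e2 = 1 := rfl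
@[simp] theorem add_e2 (x y : B F) : (x + y).e2 = x.e2 + y.e2 := rfl
@[simp] theorem neg_e2 (x : B F) : (-x).e2 = -x.e2 := rfl
@[simp] theorem mul_e2 (x y : B F) :
    (x * y).e2 = x.e2 * y.e2 := rfl
@[simp] theorem smul_e2 (c : F) (x : B F) : (c • x).e2 = c * x.e2 := rfl
@[simp] theorem zero_e3 : (0 : B F).e3 = 0 := rfl
@[simp] theorem one_e3 : (1 : B F).e3 = 1 := rfl
@[simp] theorem add_e3 (x y : B F) : (x + y).e3 = x.e3 + y.e3 := rfl
@[simp] theorem neg_e3 (x : B F) : (-x).e3 = -x.e3 := rfl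
@[simp] theorem mul_e3 (x y : B F) :
    (x * y).e3 = x.e3 * y.e3 := rfl
@[simp] theorem smul_e3 (c : F) (x : B F) : (c • x).e3 = c * x.e3 := rfl
@[simp] theorem zero_e4 : (0 : B F).e4 = 0 := rfl
@[simp] theorem one_e4 : (1 : B F).e4 = 1 := rfl
@[simp] theorem add_e4 (x y : B F) : (x + y).e4 = x.e4 + y.e4 := rfl
@[simp] theorem neg_e4 (x : B F) : (-x).e4 = -x.e4 := rfl
@[simp] theorem mul_e4 (x y : B F) :
    (x * y).e4 = x.e4 * y.e4 := rfl
@[simp] theorem smul_e4 (c : F) (x : B F) : (c • x).e4 = c * x.e4 := rfl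
@[simp] theorem zero_a0 : (0 : B F).a0 = 0 := rfl
@[simp] theorem one_a0 : (1 : B F).a0 = 0 := rfl
@[simp] theorem add_a0 (x y : B F) : (x + y).a0 = x.a0 + y.a0 := rfl
@[simp] theorem neg_a0 (x : B F) : (-x).a0 = -x.a0 := rfl
@[simp] theorem mul_a0 (x y : B F) :
    (x * y).a0 = x.e0 * y.a0 + x.a0 * y.e1 := rfl
@[simp] theorem smul_a0 (c : F) (x : B F) : (c • x).a0 = c * x.a0 := rfl
@[simp] theorem zero_a1 : (0 : B F).a1 = 0 := rfl
@[simp] theorem one_a1 : (1 : B F).a1 = 0 := rfl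
@[simp] theorem add_a1 (x y : B F) : (x + y).a1 = x.a1 + y.a1 := rfl
@[simp] theorem neg_a1 (x : B F) : (-x).a1 = -x.a1 := rfl
@[simp] theorem mul_a1 (x y : B F) :
    (x * y).a1 = x.e1 * y.a1 + x.a1 * y.e2 := rfl
@[simp] theorem smul_a1 (c : F) (x : B F) : (c • x).a1 = c * x.a1 := rfl
@[simp] theorem zero_a2 : (0 : B F).a2 = 0 := rfl
@[simp] theorem one_a2 : (1 : B F).a2 = 0 := rfl
@[simp] theorem add_a2 (x y : B F) : (x + y).a2 = x.a2 + y.a2 := rfl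
@[simp] theorem neg_a2 (x : B F) : (-x).a2 = -x.a2 := rfl
@[simp] theorem mul_a2 (x y : B F) :
    (x * y).a2 = x.e1 * y.a2 + x.a2 * y.e2 := rfl
@[simp] theorem smul_a2 (c : F) (x : B F) : (c • x).a2 = c * x.a2 := rfl
@[simp] theorem zero_a3 : (0 : B F).a3 = 0 := rfl
@[simp] theorem one_a3 : (1 : B F).a3 = 0 := rfl
@[simp] theorem add_a3 (x y : B F) : (x + y).a3 = x.a3 + y.a3 := rfl
@[simp] theorem neg_a3 (x : B F) : (-x).a3 = -x.a3 := rfl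
@[simp] theorem mul_a3 (x y : B F) :
    (x * y).a3 = x.e2 * y.a3 + x.a3 * y.e3 := rfl
@[simp] theorem smul_a3 (c : F) (x : B F) : (c • x).a3 = c * x.a3 := rfl
@[simp] theorem zero_a4 : (0 : B F).a4 = 0 := rfl
@[simp] theorem one_a4 : (1 : B F).a4 = 0 := rfl
@[simp] theorem add_a4 (x y : B F) : (x + y).a4 = x.a4 + y.a4 := rfl
@[simp] theorem neg_a4 (x : B F) : (-x).a4 = -x.a4 := rfl
@[simp] theorem mul_a4 (x y : B F) :
    (x * y).a4 = x.e2 * y.a4 + x.a4 * y.e3 := rfl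
@[simp] theorem smul_a4 (c : F) (x : B F) : (c • x).a4 = c * x.a4 := rfl
@[simp] theorem zero_a5 : (0 : B F).a5 = 0 := rfl
@[simp] theorem one_a5 : (1 : B F).a5 = 0 := rfl
@[simp] theorem add_a5 (x y : B F) : (x + y).a5 = x.a5 + y.a5 := rfl
@[simp] theorem neg_a5 (x : B F) : (-x).a5 = -x.a5 := rfl
@[simp] theorem mul_a5 (x y : B F) :
    (x * y).a5 = x.e2 * y.a5 + x.a5 * y.e3 := rfl
@[simp] theorem smul_a5 (c : F) (x : B F) : (c • x).a5 = c * x.a5 := rfl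
@[simp] theorem zero_a6 : (0 : B F).a6 = 0 := rfl
@[simp] theorem one_a6 : (1 : B F).a6 = 0 := rfl
@[simp] theorem add_a6 (x y : B F) : (x + y).a6 = x.a6 + y.a6 := rfl
@[simp] theorem neg_a6 (x : B F) : (-x).a6 = -x.a6 := rfl
@[simp] theorem mul_a6 (x y : B F) :
    (x * y).a6 = x.e3 * y.a6 + x.a6 * y.e4 := rfl
@[simp] theorem smul_a6 (c : F) (x : B F) : (c • x).a6 = c * x.a6 := rfl
@[simp] theorem zero_p : (0 : B F).p = 0 := rfl
@[simp] theorem one_p : (1 : B F).p = 0 := rfl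
@[simp] theorem add_p (x y : B F) : (x + y).p = x.p + y.p := rfl
@[simp] theorem neg_p (x : B F) : (-x).p = -x.p := rfl
@[simp] theorem mul_p (x y : B F) :
    (x * y).p = x.e0 * y.p + x.p * y.e2 + x.a0 * (y.a1 + y.a2) := rfl
@[simp] theorem smul_p (c : F) (x : B F) : (c • x).p = c * x.p := rfl
@[simp] theorem zero_q14 : (0 : B F).q14 = 0 := rfl
@[simp] theorem one_q14 : (1 : B F).q14 = 0 := rfl
@[simp] theorem add_q14 (x y : B F) : (x + y).q14 = x.q14 + y.q14 := rfl
@[simp] theorem neg_q14 (x : B F) : (-x).q14 = -x.q14 := rfl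
@[simp] theorem mul_q14 (x y : B F) :
    (x * y).q14 = x.e1 * y.q14 + x.q14 * y.e3 + x.a1 * y.a4 := rfl
@[simp] theorem smul_q14 (c : F) (x : B F) : (c • x).q14 = c * x.q14 := rfl
@[simp] theorem zero_q15 : (0 : B F).q15 = 0 := rfl
@[simp] theorem one_q15 : (1 : B F).q15 = 0 := rfl
@[simp] theorem add_q15 (x y : B F) : (x + y).q15 = x.q15 + y.q15 := rfl
@[simp] theorem neg_q15 (x : B F) : (-x).q15 = -x.q15 := rfl
@[simp] theorem mul_q15 (x y : B F) :
    (x * y).q15 = x.e1 * y.q15 + x.q15 * y.e3 + x.a1 * y.a5 := rfl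
@[simp] theorem smul_q15 (c : F) (x : B F) : (c • x).q15 = c * x.q15 := rfl
@[simp] theorem zero_q23 : (0 : B F).q23 = 0 := rfl
@[simp] theorem one_q23 : (1 : B F).q23 = 0 := rfl
@[simp] theorem add_q23 (x y : B F) : (x + y).q23 = x.q23 + y.q23 := rfl
@[simp] theorem neg_q23 (x : B F) : (-x).q23 = -x.q23 := rfl
@[simp] theorem mul_q23 (x y : B F) :
    (x * y).q23 = x.e1 * y.q23 + x.q23 * y.e3 + x.a2 * y.a3 := rfl
@[simp] theorem smul_q23 (c : F) (x : B F) : (c • x).q23 = c * x.q23 := rfl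
@[simp] theorem zero_q24 : (0 : B F).q24 = 0 := rfl
@[simp] theorem one_q24 : (1 : B F).q24 = 0 := rfl
@[simp] theorem add_q24 (x y : B F) : (x + y).q24 = x.q24 + y.q24 := rfl
@[simp] theorem neg_q24 (x : B F) : (-x).q24 = -x.q24 := rfl
@[simp] theorem mul_q24 (x y : B F) :
    (x * y).q24 = x.e1 * y.q24 + x.q24 * y.e3 + x.a2 * y.a4 := rfl
@[simp] theorem smul_q24 (c : F) (x : B F) : (c • x).q24 = c * x.q24 := rfl
@[simp] theorem zero_r : (0 : B F).r = 0 := rfl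
@[simp] theorem one_r : (1 : B F).r = 0 := rfl
@[simp] theorem add_r (x y : B F) : (x + y).r = x.r + y.r := rfl
@[simp] theorem neg_r (x : B F) : (-x).r = -x.r := rfl
@[simp] theorem mul_r (x y : B F) :
    (x * y).r = x.e2 * y.r + x.r * y.e4 + (x.a3 + x.a4 + x.a5) * y.a6 := rfl
@[simp] theorem smul_r (c : F) (x : B F) : (c • x).r = c * x.r := rfl
@[simp] theorem zero_t : (0 : B F).t = 0 := rfl
@[simp] theorem one_t : (1 : B F).t = 0 := rfl
@[simp] theorem add_t (x y : B F) : (x + y).t = x.t + y.t := rfl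
@[simp] theorem neg_t (x : B F) : (-x).t = -x.t := rfl
@[simp] theorem mul_t (x y : B F) :
    (x * y).t = x.e0 * y.t + x.t * y.e3 + x.a0 * (y.q14 + y.q24) + x.p * y.a4 := rfl
@[simp] theorem smul_t (c : F) (x : B F) : (c • x).t = c * x.t := rfl

instance : Ring (B F) where
  add_assoc x y z := by ext <;> simp [add_assoc]
  zero_add x := by ext <;> simp
  add_zero x := by ext <;> simp
  add_comm x y := by ext <;> simp [add_comm]
  neg_add_cancel x := by ext <;> simp
  nsmul := nsmulRec
  zsmul := zsmulRec
  left_distrib x y z := by ext <;> simp <;> ring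
  right_distrib x y z := by ext <;> simp <;> ring
  zero_mul x := by ext <;> simp
  mul_zero x := by ext <;> simp
  mul_assoc x y z := by ext <;> simp <;> ring
  one_mul x := by ext <;> simp
  mul_one x := by ext <;> simp

@[simp] theorem sub_e0 (x y : B F) : (x - y).e0 = x.e0 - y.e0 := by
  simp [sub_eq_add_neg]
@[simp] theorem sub_e1 (x y : B F) : (x - y).e1 = x.e1 - y.e1 := by
  simp [sub_eq_add_neg]
@[simp] theorem sub_e2 (x y : B F) : (x - y).e2 = x.e2 - y.e2 := by
  simp [sub_eq_add_neg]
@[simp] theorem sub_e3 (x y : B F) : (x - y).e3 = x.e3 - y.e3 := by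
  simp [sub_eq_add_neg]
@[simp] theorem sub_e4 (x y : B F) : (x - y).e4 = x.e4 - y.e4 := by
  simp [sub_eq_add_neg]
@[simp] theorem sub_a0 (x y : B F) : (x - y).a0 = x.a0 - y.a0 := by
  simp [sub_eq_add_neg]
@[simp] theorem sub_a1 (x y : B F) : (x - y).a1 = x.a1 - y.a1 := by
  simp [sub_eq_add_neg]
@[simp] theorem sub_a2 (x y : B F) : (x - y).a2 = x.a2 - y.a2 := by
  simp [sub_eq_add_neg]
@[simp] theorem sub_a3 (x y : B F) : (x - y).a3 = x.a3 - y.a3 := by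
  simp [sub_eq_add_neg]
@[simp] theorem sub_a4 (x y : B F) : (x - y).a4 = x.a4 - y.a4 := by
  simp [sub_eq_add_neg]
@[simp] theorem sub_a5 (x y : B F) : (x - y).a5 = x.a5 - y.a5 := by
  simp [sub_eq_add_neg]
@[simp] theorem sub_a6 (x y : B F) : (x - y).a6 = x.a6 - y.a6 := by
  simp [sub_eq_add_neg]
@[simp] theorem sub_p (x y : B F) : (x - y).p = x.p - y.p := by
  simp [sub_eq_add_neg]
@[simp] theorem sub_q14 (x y : B F) : (x - y).q14 = x.q14 - y.q14 := by
  simp [sub_eq_add_neg]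
@[simp] theorem sub_q15 (x y : B F) : (x - y).q15 = x.q15 - y.q15 := by
  simp [sub_eq_add_neg]
@[simp] theorem sub_q23 (x y : B F) : (x - y).q23 = x.q23 - y.q23 := by
  simp [sub_eq_add_neg]
@[simp] theorem sub_q24 (x y : B F) : (x - y).q24 = x.q24 - y.q24 := by
  simp [sub_eq_add_neg]
@[simp] theorem sub_r (x y : B F) : (x - y).r = x.r - y.r := by
  simp [sub_eq_add_neg]
@[simp] theorem sub_t (x y : B F) : (x - y).t = x.t - y.t := by
  simp [sub_eq_add_neg]

instance : Algebra F (B F) where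
  algebraMap :=
    { toFun := fun c => ⟨c, c, c, c, c, 0, 0, 0, 0, 0, 0, 0, 0, 0, 0, 0, 0, 0, 0⟩
      map_one' := rfl
      map_zero' := rfl
      map_add' := fun x y => by ext <;> simp
      map_mul' := fun x y => by ext <;> simp }
  commutes' c x := by ext <;> simp [mul_comm]
  smul_def' c x := by ext <;> simp

/-- the idempotents -/
def E : Fin 5 → B F :=
  ![⟨1, 0, 0, 0, 0, 0, 0, 0, 0, 0, 0, 0, 0, 0, 0, 0, 0, 0, 0⟩,
    ⟨0, 1, 0, 0, 0, 0, 0, 0, 0, 0, 0, 0, 0, 0, 0, 0, 0, 0, 0⟩,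
    ⟨0, 0, 1, 0, 0, 0, 0, 0, 0, 0, 0, 0, 0, 0, 0, 0, 0, 0, 0⟩,
    ⟨0, 0, 0, 1, 0, 0, 0, 0, 0, 0, 0, 0, 0, 0, 0, 0, 0, 0, 0⟩,
    ⟨0, 0, 0, 0, 1, 0, 0, 0, 0, 0, 0, 0, 0, 0, 0, 0, 0, 0, 0⟩]

/-- the arrows -/
def Ar : Fin 7 → B F :=
  ![⟨0, 0, 0, 0, 0, 1, 0, 0, 0, 0, 0, 0, 0, 0, 0, 0, 0, 0, 0⟩,
    ⟨0, 0, 0, 0, 0, 0, 1, 0, 0, 0, 0, 0, 0, 0, 0, 0, 0, 0, 0⟩,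
    ⟨0, 0, 0, 0, 0, 0, 0, 1, 0, 0, 0, 0, 0, 0, 0, 0, 0, 0, 0⟩,
    ⟨0, 0, 0, 0, 0, 0, 0, 0, 1, 0, 0, 0, 0, 0, 0, 0, 0, 0, 0⟩,
    ⟨0, 0, 0, 0, 0, 0, 0, 0, 0, 1, 0, 0, 0, 0, 0, 0, 0, 0, 0⟩,
    ⟨0, 0, 0, 0, 0, 0, 0, 0, 0, 0, 1, 0, 0, 0, 0, 0, 0, 0, 0⟩,
    ⟨0, 0, 0, 0, 0, 0, 0, 0, 0, 0, 0, 1, 0, 0, 0, 0, 0, 0, 0⟩]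

end B

section Iso

variable (F : Type) [Field F]

/-- image of a trivial path in the quotient -/
def qe (i : Fin 5) : Stmt11.PathAlg F := Stmt11.π F (Stmt11.e F i)

/-- image of an arrow in the quotient -/
def qa (k : Fin 7) : Stmt11.PathAlg F := Stmt11.π F (Stmt11.a F k)

theorem π_rel {x y : FreeAlgebra F Stmt11.X} (h : Stmt11.Rel F x y) :
    Stmt11.π F x = Stmt11.π F y := RingQuot.mkAlgHom_rel F h

theorem qe_mul_qe (i j : Fin 5) : qe F i * qe F j = if i = j then qe F i else 0 := by
  have := π_rel F (Stmt11.Rel.ortho i j)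
  rw [map_mul] at this
  rw [qe, qe, this]
  split_ifs <;> simp

theorem qe_sum : ∑ i, qe F i = 1 := by
  have := π_rel F (Stmt11.Rel.total (F := F))
  simpa [qe] using this

theorem src_mul (k : Fin 7) : qe F (Stmt11.src k) * qa F k = qa F k := by
  simpa [qe, qa] using π_rel F (Stmt11.Rel.src_arrow k)

theorem mul_tgt (k : Fin 7) : qa F k * qe F (Stmt11.tgt k) = qa F k := by
  simpa [qe, qa] using π_rel F (Stmt11.Rel.arrow_tgt k)

theorem qe_mul_qa (i : Fin 5) (k : Fin 7) :
    qe F i * qa F k = if i = Stmt11.src k then qa F k else 0 := by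
  rw [← src_mul, ← mul_assoc, qe_mul_qe]
  split_ifs with h
  · rw [h]
  · simp

theorem qa_mul_qe (k : Fin 7) (i : Fin 5) :
    qa F k * qe F i = if Stmt11.tgt k = i then qa F k else 0 := by
  rw [← mul_tgt, mul_assoc, qe_mul_qe]
  split_ifs with h
  · rfl
  · simp

theorem qa_mul_qa_zero (k l : Fin 7) (h : Stmt11.tgt k ≠ Stmt11.src l) :
    qa F k * qa F l = 0 := by
  rw [← mul_tgt, mul_assoc, qe_mul_qa, if_neg h, mul_zero]

theorem q02 : qa F 0 * qa F 2 = qa F 0 * qa F 1 := by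
  simpa [qa] using (π_rel F (Stmt11.Rel.rel1 (F := F))).symm
theorem q46 : qa F 4 * qa F 6 = qa F 3 * qa F 6 := by
  simpa [qa] using (π_rel F (Stmt11.Rel.rel2 (F := F))).symm
theorem q56 : qa F 5 * qa F 6 = qa F 3 * qa F 6 := by
  rw [← q46]
  simpa [qa] using (π_rel F (Stmt11.Rel.rel3 (F := F))).symm
theorem q13 : qa F 1 * qa F 3 = 0 := by
  simpa [qa] using π_rel F (Stmt11.Rel.rel4 (F := F))
theorem q25 : qa F 2 * qa F 5 = 0 := by
  simpa [qa] using π_rel F (Stmt11.Rel.rel5 (F := F))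
theorem q013 : qa F 0 * qa F 1 * qa F 3 = 0 := by rw [mul_assoc, q13, mul_zero]
theorem q015 : qa F 0 * qa F 1 * qa F 5 = 0 := by rw [← q02, mul_assoc, q25, mul_zero]
theorem q1k6 (k : Fin 7) : qa F 1 * qa F k * qa F 6 = 0 := by
  have h : qa F 1 * (qa F 3 * qa F 6) = 0 := by rw [← mul_assoc, q13, zero_mul]
  fin_cases k
  all_goals first
    | (rw [qa_mul_qa_zero F 1 _ (by decide), zero_mul])
    | (rw [mul_assoc, qa_mul_qa_zero F _ 6 (by decide), mul_zero])
    | (simp only [mul_assoc]; first | exact h | exact (congrArg _ (q46 F)).trans h |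
        exact (congrArg _ (q56 F)).trans h)
theorem q2k6 (k : Fin 7) : qa F 2 * qa F k * qa F 6 = 0 := by
  have h : qa F 2 * (qa F 3 * qa F 6) = 0 := by rw [← q56, ← mul_assoc, q25, zero_mul]
  fin_cases k
  all_goals first
    | (rw [qa_mul_qa_zero F 2 _ (by decide), zero_mul])
    | (rw [mul_assoc, qa_mul_qa_zero F _ 6 (by decide), mul_zero])
    | (simp only [mul_assoc]; first | exact h | exact (congrArg _ (q46 F)).trans h |
        exact (congrArg _ (q56 F)).trans h)

/-- generators to the model -/
def gen : Stmt11.X → B F := Sum.elim B.E B.Ar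

/-- the free algebra maps to the model -/
def freeToB : FreeAlgebra F Stmt11.X →ₐ[F] B F := FreeAlgebra.lift F (gen F)

theorem freeToB_e (i) : freeToB F (Stmt11.e F i) = B.E i := by
  simp [freeToB, Stmt11.e, gen]
theorem freeToB_a (i) : freeToB F (Stmt11.a F i) = B.Ar i := by
  simp [freeToB, Stmt11.a, gen]

theorem freeToB_rel {x y : FreeAlgebra F Stmt11.X} (h : Stmt11.Rel F x y) :
    freeToB F x = freeToB F y := by
  cases h with
  | ortho i j =>
    rw [map_mul, apply_ite (freeToB F), map_zero, freeToB_e, freeToB_e]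
    fin_cases i <;> fin_cases j <;> ext <;> simp [B.E]
  | total =>
    rw [map_sum, map_one, Fin.sum_univ_five]
    rw [freeToB_e, freeToB_e, freeToB_e, freeToB_e, freeToB_e]
    ext <;> simp [B.E]
  | src_arrow k =>
    simp only [map_mul, freeToB_e, freeToB_a]
    fin_cases k <;> ext <;> simp [B.E, B.Ar, Stmt11.src]
  | arrow_tgt k =>
    simp only [map_mul, freeToB_e, freeToB_a]
    fin_cases k <;> ext <;> simp [B.E, B.Ar, Stmt11.tgt]
  | rel1 => simp only [map_mul, freeToB_a]; ext <;> simp [B.Ar]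
  | rel2 => simp only [map_mul, freeToB_a]; ext <;> simp [B.Ar]
  | rel3 => simp only [map_mul, freeToB_a]; ext <;> simp [B.Ar]
  | rel4 => simp only [map_mul, freeToB_a, map_zero]; ext <;> simp [B.Ar]
  | rel5 => simp only [map_mul, freeToB_a, map_zero]; ext <;> simp [B.Ar]

/-- the quotient maps to the model -/
def ψ : Stmt11.PathAlg F →ₐ[F] B F :=
  RingQuot.liftAlgHom F ⟨freeToB F, fun _ _ h => freeToB_rel F h⟩

theorem ψ_π (x) : ψ F (Stmt11.π F x) = freeToB F x := by
  simp [ψ, Stmt11.π]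

theorem ψ_qe (i) : ψ F (qe F i) = B.E i := by rw [qe, ψ_π, freeToB_e]
theorem ψ_qa (i) : ψ F (qa F i) = B.Ar i := by rw [qa, ψ_π, freeToB_a]

/-- the inverse map -/
def inv (x : B F) : Stmt11.PathAlg F :=
  x.e0 • qe F 0 + x.e1 • qe F 1 + x.e2 • qe F 2 + x.e3 • qe F 3 + x.e4 • qe F 4
  + x.a0 • qa F 0 + x.a1 • qa F 1 + x.a2 • qa F 2 + x.a3 • qa F 3 + x.a4 • qa F 4
  + x.a5 • qa F 5 + x.a6 • qa F 6
  + x.p • (qa F 0 * qa F 1)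
  + x.q14 • (qa F 1 * qa F 4) + x.q15 • (qa F 1 * qa F 5)
  + x.q23 • (qa F 2 * qa F 3) + x.q24 • (qa F 2 * qa F 4)
  + x.r • (qa F 3 * qa F 6) + x.t • (qa F 0 * qa F 1 * qa F 4)

theorem ψ_inv (x : B F) : ψ F (inv F x) = x := by
  simp only [inv, map_add, map_smul, map_mul, ψ_qe, ψ_qa]
  ext <;> simp [B.E, B.Ar]

theorem inv_add (x y : B F) : inv F (x + y) = inv F x + inv F y := by
  simp only [inv, B.add_e0, B.add_e1, B.add_e2, B.add_e3, B.add_e4, B.add_a0, B.add_a1, B.add_a2,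
    B.add_a3, B.add_a4, B.add_a5, B.add_a6, B.add_p, B.add_q14, B.add_q15, B.add_q23, B.add_q24,
    B.add_r, B.add_t, add_smul]
  abel

theorem inv_smul (c : F) (x : B F) : inv F (c • x) = c • inv F x := by
  simp only [inv, B.smul_e0, B.smul_e1, B.smul_e2, B.smul_e3, B.smul_e4, B.smul_a0, B.smul_a1,
    B.smul_a2, B.smul_a3, B.smul_a4, B.smul_a5, B.smul_a6, B.smul_p, B.smul_q14, B.smul_q15,
    B.smul_q23, B.smul_q24, B.smul_r, B.smul_t, mul_smul, smul_add]

theorem inv_one : inv F 1 = 1 := by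
  rw [← qe_sum, Fin.sum_univ_five]
  simp [inv]

theorem qe_mul_inv (i : Fin 5) (x : B F) : qe F i * inv F x = inv F (B.E i * x) := by
  fin_cases i <;>
  simp [inv, mul_add, ← mul_assoc, qe_mul_qe, qe_mul_qa, B.E, Stmt11.src] <;> try abel

theorem qa_mul_inv (i : Fin 7) (x : B F) : qa F i * inv F x = inv F (B.Ar i * x) := by
  fin_cases i <;>
  simp (disch := decide) [inv, mul_add, ← mul_assoc, qa_mul_qe, B.Ar, Stmt11.tgt, qa_mul_qa_zero, q02, q13, q25, q46, q56,
    q013, q015, q1k6, q2k6, add_smul] <;> try abel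

theorem π_mul_inv (w : FreeAlgebra F Stmt11.X) :
    ∀ x : B F, Stmt11.π F w * inv F x = inv F (freeToB F w * x) := by
  induction w using FreeAlgebra.induction with
  | grade0 r =>
    intro x
    rw [AlgHom.commutes, AlgHom.commutes, ← Algebra.smul_def, ← Algebra.smul_def, inv_smul]
  | grade1 g =>
    intro x
    rcases g with i | k
    · exact (qe_mul_inv F i x).trans (by rw [← freeToB_e]; rfl)
    · exact (qa_mul_inv F k x).trans (by rw [← freeToB_a]; rfl)
  | mul a b ha hb => intro x; rw [map_mul, map_mul, mul_assoc, hb, ha, mul_assoc]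
  | add a b ha hb => intro x; rw [map_add, map_add, add_mul, add_mul, ha, hb, inv_add]

theorem inv_ψ (y : Stmt11.PathAlg F) : inv F (ψ F y) = y := by
  obtain ⟨w, rfl⟩ := RingQuot.mkAlgHom_surjective F (Stmt11.Rel F) y
  have := π_mul_inv F w 1
  rw [inv_one, mul_one, mul_one] at this
  exact ((congrArg (inv F) (ψ_π F w)).trans this.symm)

/-- The isomorphism between the quotient and the model. -/
def isoB : Stmt11.PathAlg F ≃ₐ[F] B F :=
  AlgEquiv.ofBijective (ψ F) ⟨Function.LeftInverse.injective (inv_ψ F),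
    Function.RightInverse.surjective (ψ_inv F)⟩

theorem isoB_qe (i) : isoB F (qe F i) = B.E i := ψ_qe F i
theorem isoB_qa (i) : isoB F (qa F i) = B.Ar i := ψ_qa F i

theorem qe_mem (i) : qe F i ∈ Stmt11.pathGrading F 0 :=
  Submodule.subset_span ⟨[Sum.inl i], by simp [Stmt11.wordDeg], by simp [qe, Stmt11.e]⟩
theorem qa_mem (i) : qa F i ∈ Stmt11.pathGrading F 1 :=
  Submodule.subset_span ⟨[Sum.inr i], rfl, by simp [qa, Stmt11.a]⟩

end Iso

section Gr

open GradedAlg DirectSum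

variable {F : Type} [Field F] (𝒜 : GradedAlg F)

/-- homogeneous component, as a linear map -/
def cmp (n : ℕ) : 𝒜.A →ₗ[F] 𝒜.A :=
  (𝒜.grading n).subtype ∘ₗ DirectSum.component F ℕ (fun i => ↥(𝒜.grading i)) n ∘ₗ
    (DirectSum.decomposeLinearEquiv 𝒜.grading).toLinearMap

theorem cmp_apply (n : ℕ) (x : 𝒜.A) : cmp 𝒜 n x = (decompose 𝒜.grading x n : 𝒜.A) := rfl

theorem cmp_mem (n : ℕ) (x : 𝒜.A) : cmp 𝒜 n x ∈ 𝒜.grading n := SetLike.coe_mem _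

theorem cmp_same {n : ℕ} {x : 𝒜.A} (h : x ∈ 𝒜.grading n) : cmp 𝒜 n x = x :=
  decompose_of_mem_same _ h

theorem cmp_ne {n m : ℕ} {x : 𝒜.A} (h : x ∈ 𝒜.grading n) (hn : n ≠ m) : cmp 𝒜 m x = 0 :=
  decompose_of_mem_ne _ h hn

theorem eq_zero_of_cmp {x : 𝒜.A} (h : ∀ n, cmp 𝒜 n x = 0) : x = 0 := by
  apply (decompose 𝒜.grading).injective
  rw [decompose_zero]
  ext n
  exact h n

theorem exists_bound (x : 𝒜.A) : ∃ N : ℕ, ∀ n, N ≤ n → cmp 𝒜 n x = 0 := by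
  classical
  obtain ⟨N, hN⟩ := (decompose 𝒜.grading x).support.exists_nat_subset_range
  refine ⟨N, fun n hn => ?_⟩
  by_contra hne
  have : n ∈ (decompose 𝒜.grading x).support := by
    rw [DFinsupp.mem_support_iff]
    intro h0
    apply hne
    rw [cmp_apply, h0]; rfl
  have := Finset.mem_range.1 (hN this)
  omega

theorem sum_cmp {x : 𝒜.A} {N : ℕ} (h : ∀ n, N ≤ n → cmp 𝒜 n x = 0) :
    ∑ n ∈ Finset.range N, cmp 𝒜 n x = x := by
  rw [← sub_eq_zero]
  apply eq_zero_of_cmp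
  intro m
  rw [map_sub, map_sum, sub_eq_zero]
  by_cases hm : m < N
  · rw [Finset.sum_eq_single m]
    · exact cmp_same 𝒜 (cmp_mem 𝒜 m x)
    · intro b _ hb
      exact cmp_ne 𝒜 (cmp_mem 𝒜 b x) hb
    · intro h; exact absurd (Finset.mem_range.2 hm) h
  · rw [h m (by omega)]
    apply Finset.sum_eq_zero
    intro b hb
    apply cmp_ne 𝒜 (cmp_mem 𝒜 b x)
    have := Finset.mem_range.1 hb
    omega

theorem cmp_mul_left {i : ℕ} {a : 𝒜.A} (ha : a ∈ 𝒜.grading i) (b : 𝒜.A) (n : ℕ) :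
    cmp 𝒜 n (a * b) = if i ≤ n then a * cmp 𝒜 (n - i) b else 0 :=
  coe_decompose_mul_of_left_mem 𝒜.grading n ha

theorem cmp_mul_right {i : ℕ} {b : 𝒜.A} (hb : b ∈ 𝒜.grading i) (a : 𝒜.A) (n : ℕ) :
    cmp 𝒜 n (a * b) = if i ≤ n then cmp 𝒜 (n - i) a * b else 0 :=
  coe_decompose_mul_of_right_mem 𝒜.grading n hb

theorem mem_jideal (x : 𝒜.A) : x ∈ 𝒜.jideal ↔ cmp 𝒜 0 x = 0 := Iff.rfl

variable {𝒜}

/-- data of finitely many degree zero idempotents -/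
structure Idem (𝒜 : GradedAlg F) (k : ℕ) where
  ε : Fin k → 𝒜.A
  mem : ∀ i, ε i ∈ 𝒜.grading 0
  idem : ∀ i, ε i * ε i = ε i

variable {k l : ℕ}

/-- `⊕ A ε_i` as a submodule of `A^k` -/
def prSub (v : Idem 𝒜 k) : Submodule 𝒜.A (Fin k → 𝒜.A) where
  carrier := {x | ∀ i, x i * v.ε i = x i}
  add_mem' := fun hx hy i => by
    rw [Pi.add_apply, add_mul, hx i, hy i]
  zero_mem' := fun i => by simp
  smul_mem' := fun c x hx i => by
    rw [Pi.smul_apply, smul_eq_mul, mul_assoc, hx i]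

theorem prSub_prop {v : Idem 𝒜 k} (x : prSub v) (i : Fin k) : x.1 i * v.ε i = x.1 i := x.2 i

/-- component of an element of `⊕ A ε_i` -/
def pcmp (v : Idem 𝒜 k) (n : ℕ) (x : prSub v) : prSub v :=
  ⟨fun i => cmp 𝒜 n (x.1 i), fun i => by
    have := cmp_mul_right 𝒜 (v.mem i) (x.1 i) n
    rw [prSub_prop] at this
    simpa using this.symm⟩

/-- grading of `⊕ A ε_i` generated in degree `s` -/
def pgr (v : Idem 𝒜 k) (s : ℤ) (j : ℤ) : Submodule F (prSub v) where
  carrier := {x | ∀ i, ∀ n : ℕ, (n : ℤ) + s ≠ j → cmp 𝒜 n (x.1 i) = 0}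
  add_mem' := fun hx hy i n h => by
    have h1 := hx i n h
    have h2 := hy i n h
    rw [Submodule.coe_add, Pi.add_apply, map_add, h1, h2, add_zero]
  zero_mem' := fun i n _ => by simp
  smul_mem' := fun c x hx i n h => by
    have h1 := hx i n h
    rw [Submodule.coe_smul_of_tower, Pi.smul_apply, map_smul, h1, smul_zero]

/-- elements with vanishing component in a given degree -/
def pker (v : Idem 𝒜 k) (n : ℕ) : Submodule F (prSub v) where
  carrier := {x | ∀ i, cmp 𝒜 n (x.1 i) = 0}
  add_mem' := fun hx hy i => by
    have h1 := hx i
    have h2 := hy i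
    rw [Submodule.coe_add, Pi.add_apply, map_add, h1, h2, add_zero]
  zero_mem' := fun i => by simp
  smul_mem' := fun c x hx i => by
    have h1 := hx i
    rw [Submodule.coe_smul_of_tower, Pi.smul_apply, map_smul, h1, smul_zero]

/-- The graded projective `⊕ A ε_i` generated in degree `s`. -/
def Pr (v : Idem 𝒜 k) (s : ℤ) : 𝒜.GMod where
  M := prSub v
  grading := pgr v s
  sup_eq_top := by
    rw [eq_top_iff]
    intro x _
    choose N hN using fun i => exists_bound 𝒜 (x.1 i)
    have hx : x = ∑ n ∈ Finset.range (∑ i, N i), pcmp v n x := by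
      apply Subtype.ext
      funext i
      rw [Submodule.coe_sum, Finset.sum_apply]
      refine (sum_cmp 𝒜 fun n hn => hN i n ?_).symm
      exact (Finset.single_le_sum (fun _ _ => Nat.zero_le _) (Finset.mem_univ i)).trans hn
    rw [hx]
    refine Submodule.sum_mem _ fun n _ => ?_
    refine Submodule.mem_iSup_of_mem ((n : ℤ) + s) ?_
    intro i m hm
    exact cmp_ne 𝒜 (cmp_mem 𝒜 n (x.1 i)) (by rintro rfl; exact hm rfl)
  indep := by
    rw [iSupIndep_def]
    intro j
    rw [Submodule.disjoint_def]
    intro x hx hx'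
    apply Subtype.ext
    funext i
    apply eq_zero_of_cmp
    intro n
    by_cases hn : (n : ℤ) + s = j
    · have : (⨆ (j' : ℤ) (_ : j' ≠ j), pgr v s j') ≤ pker v n := by
        refine iSup₂_le fun j' hj' y hy i => hy i n ?_
        rw [hn]; exact hj'.symm
      exact this hx' i
    · exact hx i n hn
  smul_mem := by
    intro i j a m ha hm t n hn
    rw [Submodule.coe_smul, Pi.smul_apply, smul_eq_mul, cmp_mul_left 𝒜 ha]
    split_ifs with h
    · rw [hm t (n - i) (by intro h'; apply hn; rw [← h']; push_cast [h]; ring), mul_zero]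
    · rfl

/-- projection `A^k → ⊕ A ε_i` -/
def prProj (v : Idem 𝒜 k) : (Fin k → 𝒜.A) →ₗ[𝒜.A] prSub v where
  toFun x := ⟨fun i => x i * v.ε i, fun i => by rw [mul_assoc, v.idem]⟩
  map_add' x y := by apply Subtype.ext; funext i; simp [add_mul]
  map_smul' c x := by apply Subtype.ext; funext i; simp [mul_assoc]

theorem prProj_coe (v : Idem 𝒜 k) (x : prSub v) : prProj v x.1 = x :=
  Subtype.ext (funext fun i => prSub_prop x i)

theorem Pr_fg (v : Idem 𝒜 k) (s : ℤ) : Module.Finite 𝒜.A (Pr v s).M :=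
  Module.Finite.of_surjective (prProj v) fun x => ⟨x.1, prProj_coe v x⟩

theorem Pr_proj (v : Idem 𝒜 k) (s : ℤ) : Module.Projective 𝒜.A (Pr v s).M :=
  Module.Projective.of_split (prSub v).subtype (prProj v)
    (LinearMap.ext fun x => prProj_coe v x)

/-- the generators -/
def pgen (v : Idem 𝒜 k) (i : Fin k) : prSub v := prProj v (Pi.single i 1)

theorem eq_sum_pgen (v : Idem 𝒜 k) (x : prSub v) : x = ∑ i, x.1 i • pgen v i := by
  conv_lhs => rw [← prProj_coe v x, pi_eq_sum_univ' x.1, map_sum]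
  refine Finset.sum_congr rfl fun i _ => ?_
  rw [map_smul, pgen]

theorem Pr_gen (v : Idem 𝒜 k) (s : ℤ) : (Pr v s).GenInDeg s := by
  rw [GMod.GenInDeg, eq_top_iff]
  intro x _
  have hx : x = ∑ i, x.1 i • pgen v i := eq_sum_pgen v x
  rw [hx]
  refine Submodule.sum_mem _ fun i _ => Submodule.smul_mem _ _ (Submodule.subset_span ?_)
  intro j n hn
  refine cmp_ne 𝒜 (n := 0) ?_ (by rintro rfl; apply hn; simp)
  change (Pi.single i 1 : Fin k → 𝒜.A) j * v.ε j ∈ _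
  by_cases h : j = i
  · subst h; simpa using v.mem j
  · simp [h]

/-- data of a graded map given by right multiplication with a matrix of degree `t` -/
structure Mat (v : Idem 𝒜 k) (w : Idem 𝒜 l) (t : ℕ) where
  m : Fin k → Fin l → 𝒜.A
  mem : ∀ i j, m i j ∈ 𝒜.grading t
  right : ∀ i j, m i j * w.ε j = m i j

variable {v : Idem 𝒜 k} {w : Idem 𝒜 l} {t : ℕ}

/-- right multiplication by a matrix -/
def Mat.lin (D : Mat v w t) : prSub v →ₗ[𝒜.A] prSub w where
  toFun x := ⟨fun j => ∑ i, x.1 i * D.m i j, fun j => by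
    rw [Finset.sum_mul]
    exact Finset.sum_congr rfl fun i _ => by rw [mul_assoc, D.right]⟩
  map_add' x y := by
    apply Subtype.ext; funext i; simp [add_mul, Finset.sum_add_distrib]
  map_smul' c x := by
    apply Subtype.ext; funext i; simp [mul_assoc, Finset.mul_sum]

theorem Mat.lin_apply (D : Mat v w t) (x : prSub v) (j : Fin l) :
    (D.lin x).1 j = ∑ i, x.1 i * D.m i j := rfl

/-- the graded map -/
def Mat.hom (D : Mat v w t) (s s' : ℤ) (hs : s = s' + t) : GHom (Pr v s) (Pr w s') where
  lin := D.lin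
  grad := by
    intro j x hx i n hn
    change cmp 𝒜 n (∑ a, x.1 a * D.m a i) = 0
    rw [map_sum]
    refine Finset.sum_eq_zero fun a _ => ?_
    rw [cmp_mul_right 𝒜 (D.mem a i)]
    split_ifs with h
    · rw [hx a (n - t) (by intro h'; apply hn; rw [← h', hs]; push_cast [h]; ring), zero_mul]
    · rfl

theorem Mat.minimal (D : Mat v w t) (ht : t ≠ 0) (s s' : ℤ) (hs : s = s' + t) :
    LinearMap.range (D.hom s s' hs).lin ≤
      𝒜.jideal • (⊤ : Submodule 𝒜.A (Pr w s').M) := by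
  rintro _ ⟨x, rfl⟩
  have hx : (D.hom s s' hs).lin x = ∑ j, (D.lin x).1 j • pgen w j := eq_sum_pgen w (D.lin x)
  rw [hx]
  refine Submodule.sum_mem _ fun j _ => Submodule.smul_mem_smul ?_ Submodule.mem_top
  change (∑ i, x.1 i * D.m i j) ∈ _
  refine Submodule.sum_mem _ fun i _ => Ideal.mul_mem_left _ _ ?_
  rw [mem_jideal]
  exact cmp_ne 𝒜 (D.mem i j) ht

end Gr

namespace B

variable {F : Type} [Field F]

theorem col0 {x : B F} (h : x * E 0 = x) :
    x = ⟨x.e0, 0, 0, 0, 0, 0, 0, 0, 0, 0, 0, 0, 0, 0, 0, 0, 0, 0, 0⟩ := by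
  rw [← h]; ext <;> simp [E]

theorem col1 {x : B F} (h : x * E 1 = x) :
    x = ⟨0, x.e1, 0, 0, 0, x.a0, 0, 0, 0, 0, 0, 0, 0, 0, 0, 0, 0, 0, 0⟩ := by
  rw [← h]; ext <;> simp [E]

theorem col2 {x : B F} (h : x * E 2 = x) :
    x = ⟨0, 0, x.e2, 0, 0, 0, x.a1, x.a2, 0, 0, 0, 0, x.p, 0, 0, 0, 0, 0, 0⟩ := by
  rw [← h]; ext <;> simp [E]

theorem col3 {x : B F} (h : x * E 3 = x) :
    x = ⟨0, 0, 0, x.e3, 0, 0, 0, 0, x.a3, x.a4, x.a5, 0, 0, x.q14, x.q15, x.q23, x.q24, 0, x.t⟩ := by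
  rw [← h]; ext <;> simp [E]

/-- vertices of the second syzygy -/
def rsrc : Fin 5 → Fin 5 := ![0, 2, 2, 1, 1]

/-- matrix of the second differential -/
def M1 : Fin 5 → Fin 7 → B F :=
  ![![0, Ar 0, -Ar 0, 0, 0, 0, 0],
    ![0, 0, 0, 0, 0, 0, Ar 3 - Ar 4],
    ![0, 0, 0, 0, 0, 0, Ar 4 - Ar 5],
    ![0, 0, 0, Ar 1, 0, 0, 0],
    ![0, 0, 0, 0, 0, Ar 2, 0]]

/-- matrix of the third differential -/
def M2 : Fin 5 → B F := ![0, Ar 0 * Ar 1, Ar 0 * Ar 1, 0, 0]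

theorem exact0 (x : B F) (h0 : x.e0 = 0) (h1 : x.e1 = 0) (h2 : x.e2 = 0) (h3 : x.e3 = 0)
    (h4 : x.e4 = 0) : ∃ y : Fin 7 → B F, (∀ k, y k * E (Stmt11.src k) = y k) ∧
      ∑ k, y k * Ar k = x := by
  refine ⟨![x.a0 • E 0, x.a1 • E 1 + x.p • Ar 0, x.a2 • E 1,
    x.a3 • E 2 + x.q23 • Ar 2, x.a4 • E 2 + x.q14 • Ar 1 + x.q24 • Ar 2 + x.t • (Ar 0 * Ar 1),
    x.a5 • E 2 + x.q15 • Ar 1, x.a6 • E 3 + x.r • Ar 3], ?_, ?_⟩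
  · intro k
    fin_cases k <;> ext <;> simp [E, Ar, Stmt11.src]
  · rw [Fin.sum_univ_seven]
    ext <;> simp [E, Ar, h0, h1, h2, h3, h4]

set_option maxHeartbeats 4000000 in
theorem exact1 (y : Fin 7 → B F) (hy : ∀ k, y k * E (Stmt11.src k) = y k)
    (h : ∑ k, y k * Ar k = 0) : ∃ z : Fin 5 → B F, (∀ i, z i * E (rsrc i) = z i) ∧
      ∀ k, ∑ i, z i * M1 i k = y k := by
  have c0 := col0 (hy 0)
  have c1 := col1 (hy 1)
  have c2 := col1 (hy 2)
  have c3 := col2 (hy 3)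
  have c4 := col2 (hy 4)
  have c5 := col2 (hy 5)
  have c6 := col3 (hy 6)
  rw [Fin.sum_univ_seven, c0, c1, c2, c3, c4, c5, c6] at h
  simp [B.ext_iff, Ar] at h
  refine ⟨![(y 1).a0 • E 0,
    (y 6).a3 • E 2 + (-(y 6).q15 - (y 6).q14) • Ar 1 + (y 6).q23 • Ar 2
      + (-(y 6).t) • (Ar 0 * Ar 1),
    (-(y 6).a5) • E 2 + (-(y 6).q15) • Ar 1 + ((y 6).q24 + (y 6).q23) • Ar 2,
    (y 3).a1 • E 1 + (y 3).p • Ar 0, (y 5).a2 • E 1 + (y 5).p • Ar 0], ?_, ?_⟩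
  · intro k
    fin_cases k <;> ext <;> simp [E, Ar, rsrc]
  · intro k
    rw [Fin.sum_univ_five]
    fin_cases k
    · refine Eq.trans ?_ c0.symm; ext <;> simp [E, Ar, M1] <;> grind
    · refine Eq.trans ?_ c1.symm; ext <;> simp [E, Ar, M1] <;> grind
    · refine Eq.trans ?_ c2.symm; ext <;> simp [E, Ar, M1] <;> grind
    · refine Eq.trans ?_ c3.symm; ext <;> simp [E, Ar, M1] <;> grind
    · refine Eq.trans ?_ c4.symm; ext <;> simp [E, Ar, M1] <;> grind
    · refine Eq.trans ?_ c5.symm; ext <;> simp [E, Ar, M1] <;> grind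
    · refine Eq.trans ?_ c6.symm; ext <;> simp [E, Ar, M1] <;> grind

theorem exact2 (z : Fin 5 → B F) (hz : ∀ i, z i * E (rsrc i) = z i)
    (h : ∀ k, ∑ i, z i * M1 i k = 0) : ∃ u : B F, u * E 0 = u ∧ ∀ i, u * M2 i = z i := by
  have c0 := col0 (hz 0)
  have c1 := col2 (hz 1)
  have c2 := col2 (hz 2)
  have c3 := col1 (hz 3)
  have c4 := col1 (hz 4)
  have h1 := h 1
  have h3 := h 3
  have h5 := h 5
  have h6 := h 6
  rw [Fin.sum_univ_five, c0, c1, c2, c3, c4] at h1 h3 h5 h6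
  simp [B.ext_iff, M1, Ar] at h1 h3 h5 h6
  refine ⟨(z 1).p • E 0, ?_, ?_⟩
  · ext <;> simp [E]
  · intro k
    fin_cases k
    · refine Eq.trans ?_ c0.symm; ext <;> simp [E, Ar, M2] <;> grind
    · refine Eq.trans ?_ c1.symm; ext <;> simp [E, Ar, M2] <;> grind
    · refine Eq.trans ?_ c2.symm; ext <;> simp [E, Ar, M2] <;> grind
    · refine Eq.trans ?_ c3.symm; ext <;> simp [E, Ar, M2] <;> grind
    · refine Eq.trans ?_ c4.symm; ext <;> simp [E, Ar, M2] <;> grind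

theorem exact3 (u : B F) (hu : u * E 0 = u) (h : ∀ i, u * M2 i = 0) : u = 0 := by
  have c0 := col0 hu
  have h1 := h 1
  rw [c0] at h1 ⊢
  simp [B.ext_iff, M2, Ar] at h1
  ext <;> simp [h1]

theorem comp1 (i : Fin 5) : ∑ k, M1 i k * Ar k = (0 : B F) := by
  rw [Fin.sum_univ_seven]
  fin_cases i <;> ext <;> simp [M1, Ar]

theorem comp2 (k : Fin 7) : ∑ i, M2 i * M1 i k = (0 : B F) := by
  rw [Fin.sum_univ_five]
  fin_cases k <;> ext <;> simp [M1, M2, Ar]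

theorem E_idem (i : Fin 5) : E i * E i = (E i : B F) := by
  fin_cases i <;> ext <;> simp [E]

theorem Ar_src (k : Fin 7) : Ar k * E (Stmt11.tgt k) = (Ar k : B F) := by
  fin_cases k <;> ext <;> simp [E, Ar, Stmt11.tgt]

theorem M1_right (i : Fin 5) (k : Fin 7) : M1 i k * E (Stmt11.src k) = (M1 i k : B F) := by
  fin_cases i <;> fin_cases k <;> ext <;> simp [E, Ar, Stmt11.src, M1]

theorem M2_right (i : Fin 5) : M2 i * E (rsrc i) = (M2 i : B F) := by
  fin_cases i <;> ext <;> simp [E, Ar, rsrc, M2]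

end B

section Final

open GradedAlg

variable {F : Type} [Field F] {𝒜 : GradedAlg F}

theorem exact_transport {k l c t t' : ℕ} {v : Idem 𝒜 k} {w : Idem 𝒜 l} {u : Idem 𝒜 c}
    (Φ : 𝒜.A ≃ₐ[F] B F) (D : Mat v w t) (D' : Mat w u t')
    (hz : ∀ i j, ∑ a, Φ (D.m i a) * Φ (D'.m a j) = 0)
    (H : ∀ y : Fin l → B F, (∀ j, y j * Φ (w.ε j) = y j) →
      (∀ j, ∑ i, y i * Φ (D'.m i j) = 0) →
      ∃ x : Fin k → B F, (∀ i, x i * Φ (v.ε i) = x i) ∧ ∀ j, ∑ i, x i * Φ (D.m i j) = y j) :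
    LinearMap.range D.lin = LinearMap.ker D'.lin := by
  apply le_antisymm
  · rintro _ ⟨x, rfl⟩
    rw [LinearMap.mem_ker]
    apply Subtype.ext
    funext j
    rw [Mat.lin_apply]
    simp only [Mat.lin_apply, Finset.sum_mul]
    rw [Finset.sum_comm]
    refine Finset.sum_eq_zero fun i _ => ?_
    simp only [mul_assoc, ← Finset.mul_sum]
    have : ∑ a, D.m i a * D'.m a j = 0 := by
      apply Φ.injective
      rw [map_sum, map_zero, ← hz i j]
      exact Finset.sum_congr rfl fun a _ => map_mul _ _ _
    rw [this, mul_zero]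
  · intro y hy
    rw [LinearMap.mem_ker] at hy
    obtain ⟨x, hx, hxy⟩ := H (fun j => Φ (y.1 j))
      (fun j => by rw [← map_mul, prSub_prop])
      (fun j => by
        have h := congrArg (fun q : prSub u => Φ (q.1 j)) hy
        simp only [Mat.lin_apply, map_sum, map_mul] at h
        rw [h]
        exact map_zero Φ)
    refine ⟨⟨fun i => Φ.symm (x i), fun i => ?_⟩, ?_⟩
    · apply Φ.injective
      rw [map_mul, Φ.apply_symm_apply, hx]
    · apply Subtype.ext
      funext j
      apply Φ.injective
      rw [Mat.lin_apply, map_sum, ← hxy]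
      exact Finset.sum_congr rfl fun i _ => by rw [map_mul, Φ.apply_symm_apply]

/-- the idempotent `1` -/
def v0 : Idem 𝒜 1 where
  ε _ := 1
  mem _ := SetLike.GradedOne.one_mem
  idem _ := one_mul 1

/-- no idempotents -/
def vz : Idem 𝒜 0 where
  ε i := i.elim0
  mem i := i.elim0
  idem i := i.elim0

variable (Φ : 𝒜.A ≃ₐ[F] B F) (hE : ∀ i, Φ.symm (B.E i) ∈ 𝒜.grading 0)
  (hA : ∀ i, Φ.symm (B.Ar i) ∈ 𝒜.grading 1)

/-- idempotents attached to vertices -/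
def vI {k : ℕ} (f : Fin k → Fin 5) : Idem 𝒜 k where
  ε i := Φ.symm (B.E (f i))
  mem i := hE (f i)
  idem i := by rw [← map_mul, B.E_idem]

/-- first differential -/
def D0 : Mat (vI Φ hE Stmt11.src) (v0 (𝒜 := 𝒜)) 1 where
  m i _ := Φ.symm (B.Ar i)
  mem i _ := hA i
  right _ _ := mul_one _

/-- second differential -/
def D1 : Mat (vI Φ hE B.rsrc) (vI Φ hE Stmt11.src) 1 where
  m i j := Φ.symm (B.M1 i j)
  mem i j := by
    fin_cases i <;> fin_cases j <;>
      simp [B.M1, hA, -map_sub, -map_neg] <;>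
      first
      | (rw [map_neg]; exact Submodule.neg_mem _ (hA _))
      | (rw [map_sub]; exact Submodule.sub_mem _ (hA _) (hA _))
  right i j := by
    change _ * Φ.symm _ = _
    rw [← map_mul, B.M1_right]

/-- third differential -/
def D2 : Mat (vI Φ hE (fun _ : Fin 1 => 0)) (vI Φ hE B.rsrc) 2 where
  m _ j := Φ.symm (B.M2 j)
  mem i j := by
    have h : Φ.symm (B.Ar 0) * Φ.symm (B.Ar 1) ∈ 𝒜.grading (1 + 1) :=
      SetLike.GradedMul.mul_mem (hA 0) (hA 1)
    rw [← map_mul] at h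
    fin_cases j
    · simp [B.M2]
    · exact h
    · exact h
    · simp [B.M2]
    · simp [B.M2]
  right i j := by
    change _ * Φ.symm _ = _
    rw [← map_mul, B.M2_right]

/-- the zero differentials -/
def D3 {k t : ℕ} (w : Idem 𝒜 k) : Mat vz w t where
  m i := i.elim0
  mem i := i.elim0
  right i := i.elim0

theorem exactD0 :
    LinearMap.range (D1 Φ hE hA).lin = LinearMap.ker (D0 Φ hE hA).lin := by
  refine exact_transport Φ _ _ ?_ ?_
  · intro i j
    simp only [D0, D1, AlgEquiv.apply_symm_apply]
    exact B.comp1 i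
  · intro y hy h
    simp only [D0, D1, vI, AlgEquiv.apply_symm_apply] at hy h ⊢
    exact B.exact1 y hy (h 0)

theorem exactD1 :
    LinearMap.range (D2 Φ hE hA).lin = LinearMap.ker (D1 Φ hE hA).lin := by
  refine exact_transport Φ _ _ ?_ ?_
  · intro i j
    simp only [D2, D1, AlgEquiv.apply_symm_apply]
    exact B.comp2 j
  · intro y hy h
    simp only [D2, D1, vI, AlgEquiv.apply_symm_apply] at hy h ⊢
    obtain ⟨u, hu, hu'⟩ := B.exact2 y hy h
    exact ⟨fun _ => u, fun _ => hu, fun j => by rw [Fin.sum_univ_one, hu']⟩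

theorem exactD2 {t : ℕ} :
    LinearMap.range (D3 (t := t) (vI Φ hE (fun _ : Fin 1 => 0))).lin =
      LinearMap.ker (D2 Φ hE hA).lin := by
  refine exact_transport Φ _ _ (fun i => i.elim0) ?_
  intro y hy h
  simp only [D2, vI, AlgEquiv.apply_symm_apply, Fin.sum_univ_one] at hy h
  refine ⟨fun i => i.elim0, fun i => i.elim0, fun j => ?_⟩
  rw [Fin.sum_univ_zero]
  have := B.exact3 (y 0) (hy 0) h
  rw [Subsingleton.elim j 0, this]

theorem exactDz {t t' k : ℕ} (w : Idem 𝒜 k) :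
    LinearMap.range (D3 (t := t) (vz (𝒜 := 𝒜))).lin = LinearMap.ker (D3 (t := t') w).lin := by
  ext x
  constructor
  · intro _
    rw [LinearMap.mem_ker]
    apply Subtype.ext
    funext j
    rw [Mat.lin_apply, Fin.sum_univ_zero]
    rfl
  · intro _
    exact ⟨0, Subtype.ext (funext fun i => i.elim0)⟩

/-- terms of the resolution -/
def PP : ℕ → 𝒜.GMod
  | 0 => Pr v0 0
  | 1 => Pr (vI Φ hE Stmt11.src) 1
  | 2 => Pr (vI Φ hE B.rsrc) 2
  | 3 => Pr (vI Φ hE (fun _ : Fin 1 => 0)) 4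
  | n + 4 => Pr vz ((n : ℤ) + 5)

/-- differentials -/
def dd : ∀ n : ℕ, GHom (PP Φ hE (n + 1)) (PP Φ hE n)
  | 0 => (D0 Φ hE hA).hom 1 0 (by norm_num)
  | 1 => (D1 Φ hE hA).hom 2 1 (by norm_num)
  | 2 => (D2 Φ hE hA).hom 4 2 (by norm_num)
  | 3 => (D3 (t := 1) _).hom (((0 : ℕ) : ℤ) + 5) 4 (by norm_num)
  | n + 4 => (D3 (t := 1) _).hom (((n + 1 : ℕ) : ℤ) + 5) ((n : ℤ) + 5) (by push_cast; ring)

/-- the augmentation as a linear map -/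
def augLin {T : 𝒜.GMod} (e : T.M ≃ₗ[𝒜.A] (𝒜.A ⧸ 𝒜.jideal)) :
    prSub (v0 (𝒜 := 𝒜)) →ₗ[𝒜.A] T.M :=
  e.symm.toLinearMap ∘ₗ (𝒜.jideal.mkQ) ∘ₗ LinearMap.proj 0 ∘ₗ (prSub v0).subtype

theorem augLin_eq_zero {T : 𝒜.GMod} (e : T.M ≃ₗ[𝒜.A] (𝒜.A ⧸ 𝒜.jideal))
    (x : prSub (v0 (𝒜 := 𝒜))) : augLin e x = 0 ↔ cmp 𝒜 0 (x.1 0) = 0 := by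
  rw [← mem_jideal]
  change e.symm (Submodule.Quotient.mk (x.1 0)) = 0 ↔ _
  rw [LinearEquiv.map_eq_zero_iff, Submodule.Quotient.mk_eq_zero]

/-- the augmentation -/
def augHom {T : 𝒜.GMod} (hT : ∀ j : ℤ, j ≠ 0 → T.grading j = ⊥)
    (e : T.M ≃ₗ[𝒜.A] (𝒜.A ⧸ 𝒜.jideal)) : GHom (Pr (v0 (𝒜 := 𝒜)) 0) T where
  lin := augLin e
  grad := by
    intro j x hx
    by_cases hj : j = 0
    · have : T.grading 0 = ⊤ := by
        rw [eq_top_iff, ← T.sup_eq_top]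
        refine iSup_le fun i => ?_
        by_cases hi : i = 0
        · rw [hi]
        · rw [hT i hi]; exact bot_le
      rw [hj, this]
      exact Submodule.mem_top
    · have hz : ∀ y : T.M, y = 0 → y ∈ T.grading j := by
        rintro _ rfl
        exact Submodule.zero_mem _
      exact hz _ ((augLin_eq_zero e x).2 (hx 0 0 (by simpa using Ne.symm hj)))

theorem augLin_surj {T : 𝒜.GMod} (e : T.M ≃ₗ[𝒜.A] (𝒜.A ⧸ 𝒜.jideal)) :
    Function.Surjective (augLin e) := by
  intro y
  obtain ⟨a, ha⟩ := Submodule.Quotient.mk_surjective _ (e y)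
  refine ⟨⟨fun _ => a, fun _ => mul_one a⟩, ?_⟩
  change e.symm (Submodule.Quotient.mk a) = y
  rw [ha, LinearEquiv.symm_apply_apply]

theorem cmp_zero_coord (hE : ∀ i, Φ.symm (B.E i) ∈ 𝒜.grading 0)
    (hA : ∀ i, Φ.symm (B.Ar i) ∈ 𝒜.grading 1) (x : 𝒜.A) (h : cmp 𝒜 0 x = 0) :
    (Φ x).e0 = 0 ∧ (Φ x).e1 = 0 ∧ (Φ x).e2 = 0 ∧ (Φ x).e3 = 0 ∧ (Φ x).e4 = 0 := by
  obtain ⟨b, rfl⟩ := Φ.symm.surjective x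
  rw [AlgEquiv.apply_symm_apply]
  obtain ⟨y, -, hy⟩ := B.exact0
    (b - (b.e0 • B.E 0 + b.e1 • B.E 1 + b.e2 • B.E 2 + b.e3 • B.E 3 + b.e4 • B.E 4))
    (by simp [B.E]) (by simp [B.E]) (by simp [B.E]) (by simp [B.E]) (by simp [B.E])
  have hb : b = (b.e0 • B.E 0 + b.e1 • B.E 1 + b.e2 • B.E 2 + b.e3 • B.E 3 + b.e4 • B.E 4)
      + ∑ k, y k * B.Ar k := by rw [hy]; abel
  set c : B F := (b.e0 • B.E 0 + b.e1 • B.E 1 + b.e2 • B.E 2 + b.e3 • B.E 3 + b.e4 • B.E 4) with hc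
  have h1 : cmp 𝒜 0 (Φ.symm (∑ k, y k * B.Ar k)) = 0 := by
    rw [map_sum, map_sum]
    refine Finset.sum_eq_zero fun k _ => ?_
    rw [map_mul, cmp_mul_right 𝒜 (hA k)]
    simp
  have h2 : Φ.symm c ∈ 𝒜.grading 0 := by
    simp only [hc, map_add, map_smul]
    refine Submodule.add_mem _ (Submodule.add_mem _ (Submodule.add_mem _ (Submodule.add_mem _
      ?_ ?_) ?_) ?_) ?_ <;> exact Submodule.smul_mem _ _ (hE _)
  rw [hb, map_add, map_add, h1, add_zero, cmp_same 𝒜 h2] at h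
  have h3 : c = 0 := by simpa using h
  rw [hc] at h3
  have k0 := congrArg B.e0 h3
  have k1 := congrArg B.e1 h3
  have k2 := congrArg B.e2 h3
  have k3 := congrArg B.e3 h3
  have k4 := congrArg B.e4 h3
  simp [B.E] at k0 k1 k2 k3 k4
  exact ⟨k0, k1, k2, k3, k4⟩

theorem exact_augD {T : 𝒜.GMod} (e : T.M ≃ₗ[𝒜.A] (𝒜.A ⧸ 𝒜.jideal)) :
    LinearMap.range (D0 Φ hE hA).lin = LinearMap.ker (augLin e) := by
  apply le_antisymm
  · rintro _ ⟨x, rfl⟩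
    rw [LinearMap.mem_ker, augLin_eq_zero, Mat.lin_apply, map_sum]
    refine Finset.sum_eq_zero fun k _ => ?_
    rw [cmp_mul_right 𝒜 ((D0 Φ hE hA).mem k 0)]
    simp
  · intro x hx
    rw [LinearMap.mem_ker, augLin_eq_zero] at hx
    obtain ⟨h0, h1, h2, h3, h4⟩ := cmp_zero_coord Φ hE hA _ hx
    obtain ⟨y, hy, hyx⟩ := B.exact0 _ h0 h1 h2 h3 h4
    refine ⟨⟨fun i => Φ.symm (y i), fun i => ?_⟩, ?_⟩
    · change _ * Φ.symm _ = _
      rw [← map_mul, hy]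
    · apply Subtype.ext
      funext j
      rw [Subsingleton.elim j 0]
      apply Φ.injective
      rw [Mat.lin_apply, map_sum, ← hyx]
      exact Finset.sum_congr rfl fun i _ => by
        rw [map_mul, Φ.apply_symm_apply]
        congr 1
        exact Φ.apply_symm_apply _

/-- the resolution -/
def res {T : 𝒜.GMod} (hT : ∀ j : ℤ, j ≠ 0 → T.grading j = ⊥)
    (e : T.M ≃ₗ[𝒜.A] (𝒜.A ⧸ 𝒜.jideal)) : MinRes T where
  P := PP Φ hE
  d := dd Φ hE hA
  aug := augHom hT e
  fg n := by
    match n with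
    | 0 => exact Pr_fg _ _
    | 1 => exact Pr_fg _ _
    | 2 => exact Pr_fg _ _
    | 3 => exact Pr_fg _ _
    | n + 4 => exact Pr_fg _ _
  projective n := by
    match n with
    | 0 => exact Pr_proj _ _
    | 1 => exact Pr_proj _ _
    | 2 => exact Pr_proj _ _
    | 3 => exact Pr_proj _ _
    | n + 4 => exact Pr_proj _ _
  aug_surj := augLin_surj e
  exact_aug := exact_augD Φ hE hA e
  exact n := by
    match n with
    | 0 => exact exactD0 Φ hE hA
    | 1 => exact exactD1 Φ hE hA
    | 2 => exact exactD2 Φ hE hA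
    | 3 => exact exactDz _
    | n + 4 => exact exactDz _
  minimal n := by
    match n with
    | 0 => exact Mat.minimal _ (by norm_num) _ _ (by norm_num)
    | 1 => exact Mat.minimal _ (by norm_num) _ _ (by norm_num)
    | 2 => exact Mat.minimal _ (by norm_num) _ _ (by norm_num)
    | 3 => exact Mat.minimal _ (by norm_num) _ _ (by norm_num)
    | n + 4 => exact Mat.minimal _ (by norm_num) _ _ (by push_cast; ring)

theorem res_gen (n : ℕ) : (PP Φ hE n).GenInDeg ((jump 4 3 n : ℤ) + 0) := by
  match n with
  | 0 => exact Pr_gen _ _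
  | 1 => exact Pr_gen _ _
  | 2 => exact Pr_gen _ _
  | 3 => exact Pr_gen _ _
  | n + 4 =>
    rw [GMod.GenInDeg, eq_top_iff]
    intro x _
    have : x = 0 := Subtype.ext (funext fun i => i.elim0)
    rw [this]
    exact Submodule.zero_mem _

end Final

end PK

open GradedAlg in
/-- **Example.** The quotient `A = FΓ/R` of the path algebra of the quiver
`1 →α₁ 2 ⇉α₂,α₃ 3 ⇶α₄,α₅,α₆ 4 →α₇ 5` by the ideal generated by
`α₁α₂ − α₁α₃, α₄α₇ − α₅α₇, α₅α₇ − α₆α₇, α₂α₄, α₃α₆` is a piecewise-Koszul algebra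
with `p = 3` and `d = 4`: any graded algebra whose grading corresponds to the
path-length grading of `FΓ/R` is piecewise-Koszul with period `3` and jump degree `4`. -/
theorem pathAlg_example_isPKAlg
    (F : Type) [Field F] (𝒜 : GradedAlg F)
    (iso : 𝒜.A ≃ₐ[F] Stmt11.PathAlg F)
    (hgrading : ∀ n : ℕ,
      Submodule.map iso.toLinearMap (𝒜.grading n) = Stmt11.pathGrading F n)
    (T : 𝒜.GMod) (hT : IsTrivialGMod T) :
    𝒜.IsPKAlg 3 4 T := by
  have hmem : ∀ (n : ℕ) (y : Stmt11.PathAlg F), y ∈ Stmt11.pathGrading F n →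
      iso.symm y ∈ 𝒜.grading n := by
    intro n y hy
    rw [← hgrading n] at hy
    obtain ⟨x, hx, rfl⟩ := hy
    change iso.symm (iso x) ∈ _
    rw [AlgEquiv.symm_apply_apply]
    exact hx
  have hE : ∀ i, (iso.trans (PK.isoB F)).symm (PK.B.E i) ∈ 𝒜.grading 0 := by
    intro i
    have h : (iso.trans (PK.isoB F)).symm (PK.B.E i) = iso.symm (PK.qe F i) := by
      rw [AlgEquiv.symm_apply_eq, AlgEquiv.trans_apply, AlgEquiv.apply_symm_apply, PK.isoB_qe]
    rw [h]
    exact hmem 0 _ (PK.qe_mem F i)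
  have hA : ∀ i, (iso.trans (PK.isoB F)).symm (PK.B.Ar i) ∈ 𝒜.grading 1 := by
    intro i
    have h : (iso.trans (PK.isoB F)).symm (PK.B.Ar i) = iso.symm (PK.qa F i) := by
      rw [AlgEquiv.symm_apply_eq, AlgEquiv.trans_apply, AlgEquiv.apply_symm_apply, PK.isoB_qa]
    rw [h]
    exact hmem 1 _ (PK.qa_mem F i)
  obtain ⟨hT0, ⟨e⟩⟩ := hT
  exact ⟨PK.res _ hE hA hT0 e, fun n => PK.res_gen _ hE n⟩
end
end
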